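/- Let q be an odd prime, m a divisor of (q−1)/2, and h = (q−1)/m. Then for every real α with 3 ≤ α ≤ q−1, S(m,q) < α₁·log q/((q−1)^{1/m}−1) + (8/7)·log(m·α²)/q^{1/m} + 1.053/(q−2.1) + q²·log 2/(2(2^{α/2}−1)) + log q/((q−1)^{2/m}−1), where α₁ = min{(ν₂(h)−1)/2, log α/log 4} and ν₂ denotes the 2-adic valuation. Moreover, if α is at most twice the smallest odd prime factor of h, the second term (8/7)·log(m·α²)/q^{1/m} can be omitted, and if m = 1 the final term log q/((q−1)^{2/m}−1) can be omitted. -/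

import Mathlib

/-!
Only the terms of `S(m,q)` with even order `g = gp q m p` can be positive. If `g = 2k`, then
`p ^ (m k) ≡ -1` modulo `q`, so `q ≤ p ^ (m k) + 1` and `p ^ k ≥ (q - 1) ^ (1 / m)`; the term is
then at most about `log q / (m k (q - 1) ^ (1 / m))`. The primes `p < q` of order `g` are distinct
residues, at most `m φ(g)` of them, and at most half as many (apart from `p = q - 2`) if `4 ∣ g`,
because `p` and `q - p` then have the same order and opposite parity. So every power of two `g ≥ 4`
contributes at most about `log q / (2 (q - 1) ^ (1 / m))`, and at most `2 α₁` of them are below `α`.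

An order `g < α` that is not a power of two is `2lk` with `l > 1` odd. Then `q` divides
`(p ^ (m l k) + 1) / (p ^ (m k) + 1)`, whence `p ^ (l k) ≥ q ^ (1 / m) p ^ k`, and Mertens' bound
for `∑ log p / p` applies. The orders `g ≥ α` contribute a tail of size `2 ^ (-α / 2)`, and the
primes `p > q`, grouped by `⌊p / q⌋`, contribute about `(m + 1) log q / q ^ 2`.
-/

open Filter Topology

/-- The multiplicative order `g_p` of `p^m` modulo `q`. -/
noncomputable def gp (q m p : ℕ) : ℕ := orderOf ((p : ZMod q) ^ m)

/-- The local term at a prime `p` of the prime sum `S(m,q)` of the paper. -/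
noncomputable def Sterm (q m p : ℕ) : ℝ :=
  if p = q then 0 else
    (if gp q m p = 1 then
        (q : ℝ) * Real.log p / ((p : ℝ) ^ q - 1)
          - ((q : ℝ) - 1) * Real.log p / ((p : ℝ) ^ (q - 1) - 1)
      else 0)
    + (if 3 ≤ gp q m p then
        (gp q m p : ℝ) * Real.log p / ((p : ℝ) ^ gp q m p - 1)
          - ((gp q m p : ℝ) - 1) * Real.log p / ((p : ℝ) ^ (gp q m p - 1) - 1)
      else 0)
    + (if gp q m p = 2 then Real.log p / ((p : ℝ) ^ 2 - 1) else 0)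
    + (if 4 ≤ gp q m p ∧ 2 ∣ gp q m p then
        Real.log p / ((p : ℝ) ^ (gp q m p / 2) - ((p : ℝ) ^ (gp q m p / 2))⁻¹)
      else 0)

/-- The prime sum `S(m,q)` of the paper (a sum over all primes `p ≠ q`). -/
noncomputable def Smq (q m : ℕ) : ℝ := ∑' p : Nat.Primes, Sterm q m (p : ℕ)

section LogBounds

lemma sq_sub_one_div_sq_add_one_le_log {x : ℝ} (hx : 1 ≤ x) :
    (x ^ 2 - 1) / (x ^ 2 + 1) ≤ Real.log x := by
  have h := Real.le_log_one_add_of_nonneg (show 0 ≤ x ^ 2 - 1 by nlinarith)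
  rw [add_sub_cancel, Real.log_pow] at h
  have e : 2 * (x ^ 2 - 1) / (x ^ 2 - 1 + 2) = 2 * ((x ^ 2 - 1) / (x ^ 2 + 1)) := by ring
  push_cast at h
  linarith

lemma antitoneOn_log_div_sub_inv :
    AntitoneOn (fun x : ℝ => Real.log x / (x - x⁻¹)) (Set.Ioi 1) := by
  have hderiv : ∀ x : ℝ, 1 < x → HasDerivAt (fun x : ℝ => Real.log x / (x - x⁻¹))
      ((x⁻¹ * (x - x⁻¹) - Real.log x * (1 - -(x ^ 2)⁻¹)) / (x - x⁻¹) ^ 2) x := fun x hx =>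
    (Real.hasDerivAt_log (by linarith)).div
      ((hasDerivAt_id x).sub (hasDerivAt_inv (by linarith)))
      (sub_pos.2 ((inv_lt_one_of_one_lt₀ hx).trans hx)).ne'
  refine antitoneOn_of_deriv_nonpos (convex_Ioi 1)
    (fun x hx => (hderiv x hx).continuousAt.continuousWithinAt)
    (fun x hx => (hderiv x (interior_subset hx)).differentiableAt.differentiableWithinAt)
    fun x hx => ?_
  have hx1 : 1 < x := interior_subset hx
  rw [(hderiv x hx1).deriv]
  have hlog := sq_sub_one_div_sq_add_one_le_log hx1.le
  rw [div_le_iff₀ (by positivity)] at hlog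
  have e : x⁻¹ * (x - x⁻¹) - Real.log x * (1 - -(x ^ 2)⁻¹)
      = ((x ^ 2 - 1) - Real.log x * (x ^ 2 + 1)) / x ^ 2 := by
    field_simp
    ring
  rw [e]
  exact div_nonpos_of_nonpos_of_nonneg
    (div_nonpos_of_nonpos_of_nonneg (by linarith) (sq_nonneg x)) (sq_nonneg _)

lemma antitoneOn_log_div_sq_sub_one :
    AntitoneOn (fun x : ℝ => Real.log x / (x ^ 2 - 1)) (Set.Ioi 1) := by
  have e : ∀ x : ℝ, 1 < x → Real.log x / (x ^ 2 - 1) = Real.log x / (x - x⁻¹) * x⁻¹ := by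
    intro x hx
    rw [show x ^ 2 - 1 = (x - x⁻¹) * x by field_simp, div_mul_eq_div_div, ← div_eq_mul_inv]
  intro x hx y hy hxy
  simp only [e x hx, e y hy]
  have hx0 : 0 < x := zero_lt_one.trans hx
  gcongr ?_ * ?_
  · exact inv_nonneg.2 (hx0.trans_le hxy).le
  · exact div_nonneg (Real.log_nonneg hx.le)
      (sub_nonneg.2 ((inv_lt_one_of_one_lt₀ hx).trans hx).le)
  · exact antitoneOn_log_div_sub_inv hx hy hxy
  · gcongr

lemma log_add_sub_log_le {x d : ℝ} (hx : 0 < x) (hd : 0 ≤ d) :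
    Real.log (x + d) - Real.log x ≤ d / x := by
  rw [← Real.log_div (by positivity) hx.ne', add_div, div_self hx.ne', add_comm]
  linarith [Real.log_le_sub_one_of_pos (show 0 < d / x + 1 by positivity)]

lemma log_three_le : Real.log 3 ≤ 8 / 5 * Real.log 2 := by
  have h : Real.log ((3 : ℝ) ^ 5) ≤ Real.log ((2 : ℝ) ^ 8) :=
    Real.log_le_log (by norm_num) (by norm_num)
  rw [Real.log_pow, Real.log_pow] at h
  push_cast at h
  linarith

lemma log_div_sq_sub_one_nonneg (n : ℕ) : 0 ≤ Real.log n / ((n : ℝ) ^ 2 - 1) := by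
  rcases Nat.eq_zero_or_pos n with rfl | hn
  · simp
  · have h1 : (1 : ℝ) ≤ n := by exact_mod_cast hn
    exact div_nonneg (Real.log_nonneg h1) (by nlinarith)

end LogBounds

section TelescopingSums

lemma log_div_sq_sub_one_le_sub {x : ℝ} (hx : 1 < x) :
    Real.log x / (x ^ 2 - 1) ≤
      (Real.log x + 1) / (2 * (x - 1)) - (Real.log (x + 2) + 1) / (2 * (x + 2 - 1)) := by
  have h1 : 0 < x - 1 := by linarith
  have h2 : 0 < x ^ 2 - 1 := by nlinarith
  have h3 : 0 < x + 2 - 1 := by linarith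
  have hlog : (Real.log (x + 2) - Real.log x) * (x - 1) ≤ 2 :=
    calc (Real.log (x + 2) - Real.log x) * (x - 1)
        ≤ 2 / x * x := by
          gcongr
          · exact log_add_sub_log_le (by linarith) (by norm_num)
          · linarith
      _ = 2 := div_mul_cancel₀ _ (by linarith)
  have e : (Real.log x + 1) / (2 * (x - 1)) - (Real.log (x + 2) + 1) / (2 * (x + 2 - 1))
      = ((Real.log x + 1) * (x + 1) - (Real.log (x + 2) + 1) * (x - 1)) / (2 * (x ^ 2 - 1)) := by
    field_simp
    ring
  rw [e, div_le_div_iff₀ h2 (by positivity)]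
  nlinarith

lemma sum_range_log_add_two_mul_div_le {x : ℝ} (hx : 1 < x) (k : ℕ) :
    ∑ i ∈ Finset.range k, Real.log (x + 2 * i) / ((x + 2 * i) ^ 2 - 1)
      ≤ (Real.log x + 1) / (2 * (x - 1)) := by
  set F : ℕ → ℝ := fun i => (Real.log (x + 2 * i) + 1) / (2 * (x + 2 * i - 1)) with hF
  have hstep : ∀ i : ℕ, Real.log (x + 2 * i) / ((x + 2 * i) ^ 2 - 1) ≤ F i - F (i + 1) := by
    intro i
    have h := log_div_sq_sub_one_le_sub (x := x + 2 * i) (by linarith [i.cast_nonneg (α := ℝ)])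
    have e : x + 2 * i + 2 = x + 2 * ((i + 1 : ℕ) : ℝ) := by push_cast; ring
    rwa [e] at h
  have hlast : 0 ≤ F k := by
    have : (0 : ℝ) ≤ k := k.cast_nonneg
    exact div_nonneg (by linarith [Real.log_nonneg (show 1 ≤ x + 2 * k by linarith)]) (by linarith)
  calc _ ≤ ∑ i ∈ Finset.range k, (F i - F (i + 1)) := Finset.sum_le_sum fun i _ => hstep i
    _ = F 0 - F k := Finset.sum_range_sub' F k
    _ ≤ F 0 := sub_le_self _ hlast
    _ = _ := by simp [hF]

lemma sum_odd_log_div_sq_sub_one_le {N : ℕ} (hN : 2 ≤ N) (hNodd : Odd N) {s : Finset ℕ}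
    (hs : ∀ n ∈ s, Odd n ∧ N ≤ n) :
    ∑ n ∈ s, Real.log n / ((n : ℝ) ^ 2 - 1) ≤ (Real.log N + 1) / (2 * ((N : ℝ) - 1)) := by
  set k := s.sup id + 1
  have hsub : s ⊆ (Finset.range k).image (fun i => N + 2 * i) := by
    intro n hn
    obtain ⟨⟨a, ha⟩, hNn⟩ := hs n hn
    obtain ⟨b, hb⟩ := hNodd
    have hle : n ≤ s.sup id := Finset.le_sup (f := id) hn
    exact Finset.mem_image.2 ⟨a - b, Finset.mem_range.2 (by omega), by omega⟩
  calc ∑ n ∈ s, Real.log n / ((n : ℝ) ^ 2 - 1)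
      ≤ ∑ n ∈ (Finset.range k).image (fun i => N + 2 * i), Real.log n / ((n : ℝ) ^ 2 - 1) :=
        Finset.sum_le_sum_of_subset_of_nonneg hsub fun n _ _ => log_div_sq_sub_one_nonneg n
    _ = ∑ i ∈ Finset.range k, Real.log ((N : ℝ) + 2 * i) / (((N : ℝ) + 2 * i) ^ 2 - 1) := by
        rw [Finset.sum_image fun a _ b _ h => by simpa using h]
        push_cast
        rfl
    _ ≤ _ := sum_range_log_add_two_mul_div_le (by exact_mod_cast hN) k

lemma sum_primes_log_div_sq_sub_one_le {s : Finset ℕ} (hs : ∀ p ∈ s, p.Prime) :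
    ∑ p ∈ s, Real.log p / ((p : ℝ) ^ 2 - 1) ≤ 0.76 := by
  have hodd := sum_odd_log_div_sq_sub_one_le (N := 3) (by norm_num) (by decide)
    (s := s.erase 2) fun p hp => by
      obtain ⟨hp2, hps⟩ := Finset.mem_erase.1 hp
      have := (hs p hps).two_le
      exact ⟨(hs p hps).odd_of_ne_two hp2, by omega⟩
  have htwo : ∑ p ∈ s, Real.log p / ((p : ℝ) ^ 2 - 1)
      ≤ Real.log 2 / 3 + ∑ p ∈ s.erase 2, Real.log p / ((p : ℝ) ^ 2 - 1) := by
    calc _ ≤ ∑ p ∈ insert 2 (s.erase 2), Real.log p / ((p : ℝ) ^ 2 - 1) :=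
          Finset.sum_le_sum_of_subset_of_nonneg (Finset.subset_insert_iff.2 subset_rfl)
            fun p _ _ => log_div_sq_sub_one_nonneg p
      _ = _ := by rw [Finset.sum_insert (Finset.notMem_erase 2 s)]; norm_num
  have h2 := Real.log_two_lt_d9
  have h3 := log_three_le
  norm_num at hodd htwo ⊢
  linarith

lemma log_add_div_sq_le_sub {x L : ℝ} (hx : 1 ≤ x) (hL : 0 ≤ L) :
    (Real.log x + L) / x ^ 2 ≤
      (Real.log x + L + 1) / (x - 1 / 2) - (Real.log (x + 1) + L + 1) / (x + 1 - 1 / 2) := by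
  have hlogx := Real.log_nonneg hx
  have h1 : 0 < x - 1 / 2 := by linarith
  have h2 : 0 < x + 1 - 1 / 2 := by linarith
  have hlog : (Real.log (x + 1) - Real.log x) * (x - 1 / 2) ≤ 1 :=
    calc (Real.log (x + 1) - Real.log x) * (x - 1 / 2)
        ≤ 1 / x * x := by
          gcongr
          · exact log_add_sub_log_le (by linarith) zero_le_one
          · linarith
      _ = 1 := div_mul_cancel₀ _ (by linarith)
  rw [div_sub_div _ _ h1.ne' h2.ne', div_le_div_iff₀ (by positivity) (by positivity)]
  have hprod : (x - 1 / 2) * (x + 1 - 1 / 2) ≤ x ^ 2 := by nlinarith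
  calc (Real.log x + L) * ((x - 1 / 2) * (x + 1 - 1 / 2))
      ≤ (Real.log x + L) * x ^ 2 := by gcongr
    _ ≤ _ := by
        gcongr
        nlinarith

lemma sum_Icc_log_mul_div_sq_le {x : ℝ} (hx : 1 ≤ x) (R : ℕ) :
    ∑ j ∈ Finset.Icc 1 R, Real.log (j * x) / (j * x) ^ 2
      ≤ (5 / 3 * Real.log x + 1.13) / x ^ 2 := by
  set L := Real.log x
  have hL : 0 ≤ L := Real.log_nonneg hx
  set F : ℕ → ℝ := fun j => (Real.log j + L + 1) / (j - 1 / 2) with hF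
  have hstep : ∀ j : ℕ, 1 ≤ j → Real.log (j * x) / (j : ℝ) ^ 2 ≤ F j - F (j + 1) := by
    intro j hj
    have hj' : (1 : ℝ) ≤ j := by exact_mod_cast hj
    rw [Real.log_mul (by linarith) (by linarith)]
    simpa only [hF, Nat.cast_add_one] using log_add_div_sq_le_sub hj' hL
  have hpartial : ∀ k : ℕ,
      ∑ j ∈ Finset.Icc 1 (k + 1), Real.log (j * x) / (j : ℝ) ^ 2 ≤ L + F 2 - F (k + 2) := by
    intro k
    induction k with
    | zero => simp [L]
    | succ k ih =>
      rw [Finset.sum_Icc_succ_top (by omega)]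
      linarith [hstep (k + 2) (by omega)]
  have hscale : ∑ j ∈ Finset.Icc 1 R, Real.log (j * x) / (j * x) ^ 2
      = (∑ j ∈ Finset.Icc 1 R, Real.log (j * x) / (j : ℝ) ^ 2) / x ^ 2 := by
    simp only [Finset.sum_div, mul_pow, div_div]
  rw [hscale]
  gcongr
  cases R with
  | zero => norm_num; positivity
  | succ k =>
    have hF0 : 0 ≤ F (k + 2) := by
      have hk : (1 : ℝ) ≤ (k + 2 : ℕ) := by exact_mod_cast (by omega : 1 ≤ k + 2)
      exact div_nonneg (by linarith [Real.log_nonneg hk]) (by linarith)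
    have hF2 : F 2 = 2 / 3 * (Real.log 2 + L + 1) := by simp only [hF]; push_cast; ring
    linarith [hpartial k, Real.log_two_lt_d9]

end TelescopingSums

section Mertens

lemma log_factorial_le {n : ℕ} (hn : 1 ≤ n) :
    Real.log n.factorial ≤ (n + 1) * Real.log n - n + 1 := by
  induction n, hn using Nat.le_induction with
  | base => simp
  | succ k hk ih =>
    have hk' : (0 : ℝ) < k := by exact_mod_cast hk
    have hlog := Real.one_sub_inv_le_log_of_pos (show (0 : ℝ) < (k + 1) / k by positivity)
    rw [Real.log_div (by positivity) hk'.ne', inv_div, one_sub_div (by positivity),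
      add_sub_cancel_left, div_le_iff₀ (by positivity)] at hlog
    rw [Nat.factorial_succ, Nat.cast_mul, Real.log_mul (by positivity) (by positivity)]
    push_cast
    nlinarith

lemma sum_primeFactors_log_le {n : ℕ} (hn : n ≠ 0) :
    ∑ p ∈ n.primeFactors, Real.log p ≤ Real.log n := by
  rw [← Real.log_prod fun p hp => by exact_mod_cast (Nat.prime_of_mem_primeFactors hp).ne_zero,
    ← Nat.cast_prod]
  refine Real.log_le_log ?_ ?_
  · exact_mod_cast Finset.prod_pos fun p hp => (Nat.prime_of_mem_primeFactors hp).pos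
  · exact_mod_cast Nat.le_of_dvd hn.bot_lt (Nat.prod_primeFactors_dvd n)

lemma sum_primesLE_div_mul_log_le (n : ℕ) :
    ∑ p ∈ n.primesLE, ((n / p : ℕ) : ℝ) * Real.log p ≤ Real.log n.factorial := by
  have hswap : ∑ p ∈ n.primesLE, ((n / p : ℕ) : ℝ) * Real.log p
      = ∑ k ∈ Finset.Ioc 0 n, ∑ p ∈ k.primeFactors, Real.log p :=
    calc ∑ p ∈ n.primesLE, ((n / p : ℕ) : ℝ) * Real.log p
        = ∑ p ∈ n.primesLE, ∑ k ∈ Finset.Ioc 0 n with p ∣ k, Real.log p := by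
          simp only [Finset.sum_const, Nat.Ioc_filter_dvd_card_eq_div, nsmul_eq_mul]
      _ = _ := by
          refine Finset.sum_comm' fun p k => ?_
          simp only [Nat.mem_primesLE, Finset.mem_filter, Finset.mem_Ioc, Nat.mem_primeFactors]
          constructor
          · rintro ⟨⟨_, hp⟩, ⟨hk0, hkn⟩, hpk⟩
            exact ⟨⟨hp, hpk, by omega⟩, hk0, hkn⟩
          · rintro ⟨⟨hp, hpk, _⟩, hk0, hkn⟩
            exact ⟨⟨(Nat.le_of_dvd hk0 hpk).trans hkn, hp⟩, ⟨hk0, hkn⟩, hpk⟩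
  have hfact : Real.log n.factorial = ∑ k ∈ Finset.Ioc 0 n, Real.log k := by
    rw [← Finset.prod_Ico_id_eq_factorial, Nat.cast_prod, Real.log_prod]
    · rfl
    · intro k hk
      exact_mod_cast (Nat.one_le_iff_ne_zero.1 (Finset.mem_Ico.1 hk).1)
  rw [hswap, hfact]
  exact Finset.sum_le_sum fun k hk => sum_primeFactors_log_le (Finset.mem_Ioc.1 hk).1.ne'

/-- Mertens' first theorem, from `n / p ≤ ⌊n / p⌋ + 1`: the floors add up to `log n!`, the ones to
Chebyshev's `θ n`. -/
lemma sum_primesLE_log_div_le {n : ℕ} (hn : 1 ≤ n) :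
    ∑ p ∈ n.primesLE, Real.log p / p
      ≤ Real.log n + (Real.log n + 1) / n + Real.log 4 - 1 := by
  have hn' : (0 : ℝ) < n := by exact_mod_cast hn
  have htheta : ∑ p ∈ n.primesLE, Real.log p ≤ Real.log 4 * n := by
    rw [← Chebyshev.theta_eq_sum_primesLE_log]
    exact Chebyshev.theta_le_log4_mul_x hn'.le
  have hfloor : ∀ p : ℕ, (n : ℝ) * (Real.log p / p)
      ≤ ((n / p : ℕ) : ℝ) * Real.log p + Real.log p := by
    intro p
    have h := (Nat.lt_floor_add_one ((n : ℝ) / p)).le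
    rw [Nat.floor_div_eq_div] at h
    calc (n : ℝ) * (Real.log p / p) = n / p * Real.log p := by ring
      _ ≤ (((n / p : ℕ) : ℝ) + 1) * Real.log p := by gcongr
      _ = _ := by ring
  refine le_of_mul_le_mul_left ?_ hn'
  calc n * ∑ p ∈ n.primesLE, Real.log p / p
      ≤ ∑ p ∈ n.primesLE, ((n / p : ℕ) : ℝ) * Real.log p + ∑ p ∈ n.primesLE, Real.log p := by
        rw [Finset.mul_sum, ← Finset.sum_add_distrib]
        exact Finset.sum_le_sum fun p _ => hfloor p
    _ ≤ ((n + 1) * Real.log n - n + 1) + Real.log 4 * n :=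
        add_le_add ((sum_primesLE_div_mul_log_le n).trans (log_factorial_le hn)) htheta
    _ = n * (Real.log n + (Real.log n + 1) / n + Real.log 4 - 1) := by
        field_simp
        ring

end Mertens

section Orders

lemma orderOf_neg_of_four_dvd {M : Type*} [Monoid M] [HasDistribNeg M] {x : M}
    (h : 4 ∣ orderOf x) : orderOf (-x) = orderOf x := by
  have hpow : ∀ n, 2 ∣ n → (-x) ^ n = x ^ n := fun n hn => (even_iff_two_dvd.2 hn).neg_pow x
  refine Nat.dvd_antisymm (orderOf_dvd_of_pow_eq_one ?_) (orderOf_dvd_of_pow_eq_one ?_)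
  · rw [hpow _ (by omega), pow_orderOf_eq_one]
  · have hdouble : orderOf x ∣ 2 * orderOf (-x) := orderOf_dvd_of_pow_eq_one <| by
      rw [← hpow _ (dvd_mul_right 2 _), mul_comm, pow_mul, pow_orderOf_eq_one, one_pow]
    have : 4 ∣ 2 * orderOf (-x) := h.trans hdouble
    rw [← hpow _ (by omega), pow_orderOf_eq_one]

lemma orderOf_neg_pow_of_four_dvd {M : Type*} [Monoid M] [HasDistribNeg M] {x : M} {m : ℕ}
    (h : 4 ∣ orderOf (x ^ m)) : orderOf ((-x) ^ m) = orderOf (x ^ m) := by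
  rcases m.even_or_odd with hm | hm
  · rw [hm.neg_pow]
  · rw [hm.neg_pow, orderOf_neg_of_four_dvd h]

section Domain

variable {R : Type*} [CommRing R] [IsDomain R]

lemma pow_eq_neg_one_of_orderOf_eq_two_mul {x : R} {k : ℕ} (hk : 0 < k)
    (hx : orderOf x = 2 * k) : x ^ k = -1 :=
  ((IsPrimitiveRoot.orderOf x).pow (by omega) (by rw [hx, mul_comm])).eq_neg_one_of_two_right

lemma card_le_totient_of_orderOf_eq {g : ℕ} (hg : 0 < g) {s : Finset R}
    (hs : ∀ x ∈ s, orderOf x = g) : s.card ≤ g.totient := by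
  rcases s.eq_empty_or_nonempty with rfl | ⟨x, hx⟩
  · simp
  · have hprim : ∀ y ∈ s, IsPrimitiveRoot y g := fun y hy => hs y hy ▸ IsPrimitiveRoot.orderOf y
    rw [← (hprim x hx).card_primitiveRoots]
    exact Finset.card_le_card fun y hy => (mem_primitiveRoots hg).2 (hprim y hy)

lemma card_le_mul_totient_of_orderOf_pow_eq {m g : ℕ} (hm : 0 < m) (hg : 0 < g) {s : Finset R}
    (hs : ∀ x ∈ s, orderOf (x ^ m) = g) : s.card ≤ m * g.totient := by
  classical
  have hfiber : ∀ y ∈ s.image (· ^ m), (s.filter (· ^ m = y)).card ≤ m := fun y _ =>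
    calc (s.filter (· ^ m = y)).card ≤ (Polynomial.nthRootsFinset m y).card :=
          Finset.card_le_card fun x hx =>
            (Polynomial.mem_nthRootsFinset hm y).2 (Finset.mem_filter.1 hx).2
      _ ≤ m := by
          rw [Polynomial.nthRootsFinset_def]
          exact (Multiset.toFinset_card_le _).trans (Polynomial.card_nthRoots m y)
  calc s.card ≤ m * (s.image (· ^ m)).card := Finset.card_le_mul_card_image s m hfiber
    _ ≤ m * g.totient := Nat.mul_le_mul_left m <|
        card_le_totient_of_orderOf_eq hg (Finset.forall_mem_image.2 hs)

end Domain

lemma two_mul_card_le_mul_totient_of_odd_val {q m g : ℕ} [Fact q.Prime] (hq : Odd q)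
    (hm : 0 < m) (hg : 0 < g) (hg4 : 4 ∣ g) {s : Finset (ZMod q)} (hodd : ∀ x ∈ s, Odd x.val)
    (hs : ∀ x ∈ s, orderOf (x ^ m) = g) : 2 * s.card ≤ m * g.totient := by
  have hdisj : Disjoint s (s.map (Equiv.neg _).toEmbedding) := by
    rw [Finset.disjoint_left]
    intro x hx hx'
    obtain ⟨y, hy, rfl⟩ := Finset.mem_map.1 hx'
    have hy0 : y ≠ 0 := by
      rintro rfl
      simpa using hodd 0 hy
    have heven : Even (-y).val := by
      rw [ZMod.neg_val, if_neg hy0]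
      exact Nat.Odd.sub_odd hq (hodd y hy)
    exact Nat.not_even_iff_odd.2 (hodd _ hx) heven
  calc 2 * s.card = (s ∪ s.map (Equiv.neg _).toEmbedding).card := by
        rw [Finset.card_union_of_disjoint hdisj, Finset.card_map, two_mul]
    _ ≤ m * g.totient := card_le_mul_totient_of_orderOf_pow_eq hm hg fun x hx => by
        rcases Finset.mem_union.1 hx with hx | hx
        · exact hs x hx
        · obtain ⟨y, hy, rfl⟩ := Finset.mem_map.1 hx
          exact (orderOf_neg_pow_of_four_dvd (by rwa [hs y hy])).trans (hs y hy)

lemma mul_le_pow_of_prime_dvd_pow_add_one {q a l : ℕ} (hq : q.Prime) (hl : Odd l)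
    (hdvd : q ∣ a ^ l + 1) (hndvd : ¬ q ∣ a + 1) : q * a ≤ a ^ l := by
  obtain ⟨b, hb⟩ : a + 1 ∣ a ^ l + 1 := by simpa using hl.nat_add_dvd_pow_add_pow a 1
  have hqb : q ∣ b := (hq.dvd_mul.1 (hb ▸ hdvd)).resolve_left hndvd
  have hb0 : 0 < b := Nat.pos_of_ne_zero (by rintro rfl; simp at hb)
  have hmul : (a + 1) * q ≤ a ^ l + 1 := hb ▸ Nat.mul_le_mul_left _ (Nat.le_of_dvd hb0 hqb)
  have hq1 := hq.one_le
  nlinarith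

end Orders

section GP

variable {q m p : ℕ} [Fact q.Prime]

lemma gp_dvd {h : ℕ} (hmh : m * h = q - 1) (hp : ¬ q ∣ p) : gp q m p ∣ h := by
  refine orderOf_dvd_of_pow_eq_one ?_
  rw [← pow_mul, hmh]
  exact ZMod.pow_card_sub_one_eq_one (mt (ZMod.natCast_eq_zero_iff p q).1 hp)

lemma dvd_pow_add_one_of_gp_eq {k : ℕ} (hk : 0 < k) (hg : gp q m p = 2 * k) :
    q ∣ p ^ (m * k) + 1 := by
  rw [← ZMod.natCast_eq_zero_iff]
  push_cast
  rw [pow_mul, pow_eq_neg_one_of_orderOf_eq_two_mul hk hg, neg_add_cancel]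

lemma le_pow_add_one_of_gp_eq {k : ℕ} (hk : 0 < k) (hg : gp q m p = 2 * k) :
    q ≤ p ^ (m * k) + 1 :=
  Nat.le_of_dvd (Nat.succ_pos _) (dvd_pow_add_one_of_gp_eq hk hg)

lemma mul_pow_le_pow_of_gp_eq {l k : ℕ} (hl : Odd l) (hl1 : 1 < l) (hk : 0 < k)
    (hg : gp q m p = 2 * (l * k)) : q * p ^ (m * k) ≤ p ^ (m * (l * k)) := by
  have e : p ^ (m * (l * k)) = (p ^ (m * k)) ^ l := by rw [← pow_mul]; ring_nf
  rw [e]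
  refine mul_le_pow_of_prime_dvd_pow_add_one Fact.out hl
    (e ▸ dvd_pow_add_one_of_gp_eq (by positivity) hg) fun hdvd => ?_
  rw [← ZMod.natCast_eq_zero_iff] at hdvd
  push_cast at hdvd
  have hone : ((p : ZMod q) ^ m) ^ (2 * k) = 1 := by
    rw [← pow_mul, show m * (2 * k) = m * k * 2 by ring, pow_mul,
      eq_neg_of_add_eq_zero_left hdvd, neg_one_sq]
  have hle : 2 * (l * k) ≤ 2 * k := hg ▸ orderOf_le_of_pow_eq_one (by omega) hone
  nlinarith

lemma card_le_mul_totient_of_gp_eq {g : ℕ} (hm : 0 < m) (hg : 0 < g) (j : ℕ) {s : Finset ℕ}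
    (hblock : ∀ p ∈ s, p / q = j) (hs : ∀ p ∈ s, gp q m p = g) :
    s.card ≤ m * g.totient := by
  have hinj : Set.InjOn (Nat.cast : ℕ → ZMod q) s := by
    intro a ha b hb hab
    have hmod : a % q = b % q := (ZMod.natCast_eq_natCast_iff' a b q).1 hab
    rw [← Nat.div_add_mod a q, ← Nat.div_add_mod b q, hmod, hblock a ha, hblock b hb]
  rw [← Finset.card_image_of_injOn hinj]
  exact card_le_mul_totient_of_orderOf_pow_eq hm hg (Finset.forall_mem_image.2 hs)

/-- Negation identifies residues in pairs of one odd and one even representative. The prime `2` is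
counted through `-2`, the residue of `q - 2`. -/
lemma two_mul_card_le_mul_totient_of_gp_eq {g : ℕ} (hq : Odd q) (hm : 0 < m) (hg : 0 < g)
    (hg4 : 4 ∣ g) {s : Finset ℕ} (hs : ∀ p ∈ s, p.Prime ∧ p < q ∧ p ≠ q - 2 ∧ gp q m p = g) :
    2 * s.card ≤ m * g.totient := by
  set r : ℕ → ZMod q := fun p => if p = 2 then -(2 : ℕ) else p with hr
  have hq2 : 2 ≤ q := (Fact.out : q.Prime).two_le
  have hval : ∀ p ∈ s, (r p).val = if p = 2 then q - 2 else p := by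
    intro p hp
    have hpq := (hs p hp).2.1
    simp only [hr]
    split_ifs with h2
    · subst h2
      rw [ZMod.neg_val', ZMod.val_natCast_of_lt hpq, Nat.mod_eq_of_lt (by omega)]
    · exact ZMod.val_natCast_of_lt hpq
  have hinj : Set.InjOn r s := by
    intro a ha b hb hab
    have hab' := congrArg ZMod.val hab
    rw [hval a ha, hval b hb] at hab'
    have ha2 := (hs a ha).2.2.1
    have hb2 := (hs b hb).2.2.1
    split_ifs at hab' <;> omega
  rw [← Finset.card_image_of_injOn hinj]
  refine two_mul_card_le_mul_totient_of_odd_val hq hm hg hg4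
    (Finset.forall_mem_image.2 fun p hp => ?_) (Finset.forall_mem_image.2 fun p hp => ?_)
  · rw [hval p hp]
    split_ifs with h2
    · exact Nat.Odd.sub_even hq2 hq even_two
    · exact (hs p hp).1.odd_of_ne_two h2
  · have hgp : orderOf ((p : ZMod q) ^ m) = g := (hs p hp).2.2.2
    simp only [hr]
    split_ifs with h2
    · subst h2
      exact (orderOf_neg_pow_of_four_dvd (by rwa [hgp])).trans hgp
    · exact hgp

end GP

section EvenTerm

/-- The part of `Sterm q m p` carried by even orders. The rest of `Sterm q m p` is nonpositive, so
upper bounds for `S(m,q)` only need this part. -/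
noncomputable def evenTerm (q m p : ℕ) : ℝ :=
  (if gp q m p = 2 then Real.log p / ((p : ℝ) ^ 2 - 1) else 0)
    + (if 4 ≤ gp q m p ∧ 2 ∣ gp q m p then
        Real.log p / ((p : ℝ) ^ (gp q m p / 2) - ((p : ℝ) ^ (gp q m p / 2))⁻¹)
      else 0)

variable {q m p : ℕ}

lemma evenTerm_of_gp_eq_two (hg : gp q m p = 2) :
    evenTerm q m p = Real.log p / ((p : ℝ) ^ 2 - 1) := by
  simp [evenTerm, hg]

lemma evenTerm_of_gp_eq_two_mul {k : ℕ} (hk : 2 ≤ k) (hg : gp q m p = 2 * k) :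
    evenTerm q m p = Real.log p / ((p : ℝ) ^ k - ((p : ℝ) ^ k)⁻¹) := by
  rw [evenTerm, if_neg (by omega), if_pos (by omega), hg, Nat.mul_div_cancel_left _ two_pos,
    zero_add]

lemma evenTerm_of_odd_gp (hg : Odd (gp q m p)) : evenTerm q m p = 0 := by
  obtain ⟨k, hk⟩ := hg
  rw [evenTerm, if_neg (by omega), if_neg (by omega), zero_add]

lemma evenTerm_nonneg (q m p : ℕ) : 0 ≤ evenTerm q m p := by
  have hinv : 0 ≤ Real.log p / ((p : ℝ) ^ (gp q m p / 2) - ((p : ℝ) ^ (gp q m p / 2))⁻¹) := by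
    rcases Nat.eq_zero_or_pos p with rfl | hp
    · simp
    · have hpow : 1 ≤ (p : ℝ) ^ (gp q m p / 2) := one_le_pow₀ (by exact_mod_cast hp)
      exact div_nonneg (Real.log_natCast_nonneg p)
        (sub_nonneg.2 ((inv_le_one_of_one_le₀ hpow).trans hpow))
  have hsq := log_div_sq_sub_one_nonneg p
  unfold evenTerm
  split_ifs <;> linarith

lemma evenTerm_le_div_pow_sub_one {k : ℕ} (hp : 2 ≤ p) (hk : 2 ≤ k) (hg : gp q m p = 2 * k) :
    evenTerm q m p ≤ Real.log p / ((p : ℝ) ^ k - 1) := by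
  have hpow : 1 < (p : ℝ) ^ k := one_lt_pow₀ (by exact_mod_cast hp) (by omega)
  rw [evenTerm_of_gp_eq_two_mul hk hg]
  have hinv := inv_le_one_of_one_le₀ hpow.le
  gcongr

lemma evenTerm_le (hp : 2 ≤ p) : evenTerm q m p ≤ Real.log p / ((p : ℝ) ^ 2 - 1) := by
  have hp' : (1 : ℝ) < p := by exact_mod_cast hp
  rcases Nat.even_or_odd' (gp q m p) with ⟨k, hk | hk⟩
  · rcases Nat.lt_or_ge k 2 with hk2 | hk2
    · interval_cases k
      · simpa [evenTerm, hk] using log_div_sq_sub_one_nonneg p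
      · exact (evenTerm_of_gp_eq_two hk).le
    · refine (evenTerm_le_div_pow_sub_one hp hk2 hk).trans ?_
      gcongr
      · nlinarith
      · exact hp'.le
  · rw [evenTerm_of_odd_gp ⟨k, hk⟩]
    exact log_div_sq_sub_one_nonneg p

lemma evenTerm_le_div_of_six_le_gp (hp : 2 ≤ p) (hg : 6 ≤ gp q m p) :
    evenTerm q m p ≤ Real.log p / ((p : ℝ) ^ 2 - 1) / p := by
  have hp' : (2 : ℝ) ≤ p := by exact_mod_cast hp
  rcases Nat.even_or_odd' (gp q m p) with ⟨k, hk | hk⟩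
  · refine (evenTerm_le_div_pow_sub_one hp (by omega) hk).trans ?_
    have hpow : (p : ℝ) ^ 3 ≤ (p : ℝ) ^ k := pow_le_pow_right₀ (by linarith) (by omega)
    rw [div_div]
    gcongr
    · nlinarith
    · nlinarith
  · rw [evenTerm_of_odd_gp ⟨k, hk⟩]
    exact div_nonneg (log_div_sq_sub_one_nonneg p) p.cast_nonneg

lemma evenTerm_le_of_two_mul_le_gp {β : ℝ} (hp : 2 ≤ p) (hβ : 2 ≤ β) (hg : 2 * β ≤ gp q m p) :
    evenTerm q m p ≤ 4 / ((2 : ℝ) ^ β - 1) * (Real.log p / ((p : ℝ) ^ 2 - 1)) := by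
  have hp' : (2 : ℝ) ≤ p := by exact_mod_cast hp
  have h2β : (1 : ℝ) < (2 : ℝ) ^ β := Real.one_lt_rpow one_lt_two (by linarith)
  rcases Nat.even_or_odd' (gp q m p) with ⟨k, hk | hk⟩
  · have hβk : β ≤ k := by
      rw [hk] at hg
      push_cast at hg
      linarith
    have hk2 : 2 ≤ k := by exact_mod_cast hβ.trans hβk
    refine (evenTerm_le_div_pow_sub_one hp hk2 hk).trans ?_
    have hpow : (2 : ℝ) ^ β * ((p : ℝ) / 2) ^ 2 ≤ (p : ℝ) ^ k :=
      calc (2 : ℝ) ^ β * ((p : ℝ) / 2) ^ 2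
          ≤ (2 : ℝ) ^ β * ((p : ℝ) / 2) ^ β := by
            rw [← Real.rpow_two]
            gcongr
            linarith
        _ = (p : ℝ) ^ β := by
            rw [← Real.mul_rpow zero_le_two (by positivity), mul_div_cancel₀ _ two_ne_zero]
        _ ≤ (p : ℝ) ^ (k : ℝ) := by
            gcongr
            linarith
        _ = (p : ℝ) ^ k := Real.rpow_natCast _ k
    have hsq : (1 : ℝ) ≤ ((p : ℝ) / 2) ^ 2 := one_le_pow₀ (by linarith)
    rw [div_mul_div_comm, mul_comm 4, ← div_div_eq_mul_div]
    gcongr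
    · have : (0 : ℝ) < 2 ^ β - 1 := by linarith
      have : (0 : ℝ) < (p : ℝ) ^ 2 - 1 := by nlinarith
      positivity
    · nlinarith
  · rw [evenTerm_of_odd_gp ⟨k, hk⟩]
    exact mul_nonneg (div_nonneg (by norm_num) (by linarith)) (log_div_sq_sub_one_nonneg p)

lemma sum_evenTerm_le_of_two_mul_le_gp {β : ℝ} (hβ : 2 ≤ β) {s : Finset ℕ}
    (hs : ∀ p ∈ s, p.Prime ∧ 2 * β ≤ gp q m p) :
    ∑ p ∈ s, evenTerm q m p ≤ 3.04 / ((2 : ℝ) ^ β - 1) := by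
  have h2β : (1 : ℝ) < (2 : ℝ) ^ β := Real.one_lt_rpow one_lt_two (by linarith)
  calc ∑ p ∈ s, evenTerm q m p
      ≤ ∑ p ∈ s, 4 / ((2 : ℝ) ^ β - 1) * (Real.log p / ((p : ℝ) ^ 2 - 1)) :=
        Finset.sum_le_sum fun p hp =>
          evenTerm_le_of_two_mul_le_gp (hs p hp).1.two_le hβ (hs p hp).2
    _ = 4 / ((2 : ℝ) ^ β - 1) * ∑ p ∈ s, Real.log p / ((p : ℝ) ^ 2 - 1) := by
        rw [Finset.mul_sum]
    _ ≤ 4 / ((2 : ℝ) ^ β - 1) * 0.76 :=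
        mul_le_mul_of_nonneg_left (sum_primes_log_div_sq_sub_one_le fun p hp => (hs p hp).1)
          (div_nonneg (by norm_num) (by linarith))
    _ = _ := by ring

end EvenTerm

section Summation

lemma antitoneOn_mul_div_pow_sub_one {x a : ℝ} (hx : 2 ≤ x) (ha : 0 ≤ a) :
    AntitoneOn (fun n : ℕ => (n : ℝ) * a / (x ^ n - 1)) (Set.Ici 1) := by
  refine antitoneOn_nat_Ici_of_succ_le fun n hn => ?_
  have h1 : 1 < x ^ n := one_lt_pow₀ (by linarith) (by omega)
  have h2 : 1 < x ^ (n + 1) := one_lt_pow₀ (by linarith) (by omega)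
  have hn' : (1 : ℝ) ≤ n := by exact_mod_cast hn
  have hmul : ((n : ℝ) + 1) * (x ^ n - 1) ≤ n * (x ^ (n + 1) - 1) := by
    have : 2 * (n * x ^ n) ≤ x * (n * x ^ n) := by gcongr
    rw [pow_succ]
    nlinarith
  push_cast
  rw [div_le_div_iff₀ (by linarith) (by linarith)]
  nlinarith

lemma mul_div_pow_sub_one_sub_mem_Icc {x a : ℝ} (hx : 2 ≤ x) (ha : 0 ≤ a) {n : ℕ} (hn : 3 ≤ n) :
    (n : ℝ) * a / (x ^ n - 1) - ((n : ℝ) - 1) * a / (x ^ (n - 1) - 1)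
      ∈ Set.Icc (-(2 * a / (x ^ 2 - 1))) 0 := by
  obtain ⟨k, rfl⟩ : ∃ k, n = k + 1 := ⟨n - 1, by omega⟩
  have hanti := antitoneOn_mul_div_pow_sub_one hx ha
  have hstep := hanti (show 1 ≤ k by omega) (show 1 ≤ k + 1 by omega) k.le_succ
  have htwo := hanti (show 1 ≤ 2 by omega) (show 1 ≤ k by omega) (show 2 ≤ k by omega)
  have hpos : 0 ≤ ((k + 1 : ℕ) : ℝ) * a / (x ^ (k + 1) - 1) :=
    div_nonneg (by positivity) (sub_nonneg.2 (one_le_pow₀ (by linarith)))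
  rw [Nat.cast_add_one, add_sub_cancel_right, Nat.add_sub_cancel]
  push_cast at hstep htwo hpos
  exact ⟨by linarith, by linarith⟩

variable {q m p : ℕ}

lemma Sterm_sub_evenTerm_mem_Icc (hq : 3 ≤ q) (hp : 2 ≤ p) (hpq : p ≠ q) :
    Sterm q m p - evenTerm q m p ∈ Set.Icc (-(2 * (Real.log p / ((p : ℝ) ^ 2 - 1)))) 0 := by
  have hdiff : ∀ n : ℕ, 3 ≤ n →
      (n : ℝ) * Real.log p / ((p : ℝ) ^ n - 1)
          - ((n : ℝ) - 1) * Real.log p / ((p : ℝ) ^ (n - 1) - 1)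
        ∈ Set.Icc (-(2 * (Real.log p / ((p : ℝ) ^ 2 - 1)))) 0 := fun n hn => by
    rw [← mul_div_assoc]
    exact mul_div_pow_sub_one_sub_mem_Icc (by exact_mod_cast hp) (Real.log_natCast_nonneg p) hn
  have hzero : (0 : ℝ) ∈ Set.Icc (-(2 * (Real.log p / ((p : ℝ) ^ 2 - 1)))) 0 :=
    ⟨by linarith [log_div_sq_sub_one_nonneg p], le_rfl⟩
  rw [Sterm, if_neg hpq, evenTerm, add_assoc, add_sub_cancel_right]
  split_ifs with h1 h3 h3
  · omega
  · simpa only [add_zero] using hdiff q hq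
  · simpa only [zero_add] using hdiff _ h3
  · simpa only [add_zero] using hzero

lemma Sterm_le_evenTerm (hq : 3 ≤ q) (hp : 2 ≤ p) : Sterm q m p ≤ evenTerm q m p := by
  by_cases hpq : p = q
  · rw [Sterm, if_pos hpq]
    exact evenTerm_nonneg q m p
  · exact sub_nonpos.1 (Sterm_sub_evenTerm_mem_Icc hq hp hpq).2

lemma abs_Sterm_le (hq : 3 ≤ q) (hp : 2 ≤ p) :
    |Sterm q m p| ≤ 2 * (Real.log p / ((p : ℝ) ^ 2 - 1)) := by
  have hlog := log_div_sq_sub_one_nonneg p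
  by_cases hpq : p = q
  · rw [Sterm, if_pos hpq, abs_zero]
    positivity
  · obtain ⟨hlower, hupper⟩ := Sterm_sub_evenTerm_mem_Icc (m := m) hq hp hpq
    have hle := evenTerm_le (q := q) (m := m) hp
    have hnonneg := evenTerm_nonneg q m p
    rw [abs_le]
    constructor <;> linarith

lemma sum_primes_eq_sum_map (f : ℕ → ℝ) (s : Finset Nat.Primes) :
    ∑ p ∈ s, f p = ∑ p ∈ s.map (Function.Embedding.subtype _), f p :=
  (Finset.sum_map s (Function.Embedding.subtype _) f).symm

lemma prime_of_mem_map_subtype {s : Finset Nat.Primes} {p : ℕ}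
    (hp : p ∈ s.map (Function.Embedding.subtype _)) : p.Prime := by
  obtain ⟨p, -, rfl⟩ := Finset.mem_map.1 hp
  exact p.2

lemma summable_log_div_sq_sub_one :
    Summable fun p : Nat.Primes => Real.log (p : ℕ) / (((p : ℕ) : ℝ) ^ 2 - 1) :=
  summable_of_sum_le (fun _ => log_div_sq_sub_one_nonneg _) fun _ => by
    rw [sum_primes_eq_sum_map (fun p => Real.log p / ((p : ℝ) ^ 2 - 1))]
    exact sum_primes_log_div_sq_sub_one_le fun p hp => prime_of_mem_map_subtype hp

lemma summable_Sterm (hq : 3 ≤ q) : Summable fun p : Nat.Primes => Sterm q m p :=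
  .of_norm_bounded (summable_log_div_sq_sub_one.mul_left 2) fun p => abs_Sterm_le hq p.2.two_le

lemma Smq_le_of_forall_sum_evenTerm_le {C : ℝ} (hq : 3 ≤ q)
    (hC : ∀ s : Finset ℕ, (∀ p ∈ s, p.Prime) → ∑ p ∈ s, evenTerm q m p ≤ C) : Smq q m ≤ C :=
  (summable_Sterm hq).tsum_le_of_sum_le fun s =>
    calc ∑ p ∈ s, Sterm q m p ≤ ∑ p ∈ s, evenTerm q m p :=
          Finset.sum_le_sum fun p _ => Sterm_le_evenTerm hq p.2.two_le
      _ = ∑ p ∈ s.map (Function.Embedding.subtype _), evenTerm q m p :=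
          sum_primes_eq_sum_map _ s
      _ ≤ C := hC _ fun _ hp => prime_of_mem_map_subtype hp

lemma Smq_le (hq : 3 ≤ q) : Smq q m ≤ 0.76 :=
  Smq_le_of_forall_sum_evenTerm_le hq fun _ hs =>
    (Finset.sum_le_sum fun p hp => evenTerm_le (hs p hp).two_le).trans
      (sum_primes_log_div_sq_sub_one_le hs)

end Summation

lemma sum_le_mul_of_card_le {ι : Type*} {s : Finset ι} {f : ι → ℝ} {c N : ℝ} (hc : 0 ≤ c)
    (hcard : (s.card : ℝ) ≤ N) (hf : ∀ i ∈ s, f i ≤ c) : ∑ i ∈ s, f i ≤ N * c :=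
  calc ∑ i ∈ s, f i ≤ s.card * c := by
        rw [← nsmul_eq_mul]
        exact Finset.sum_le_card_nsmul s f c hf
    _ ≤ N * c := by gcongr

section PowersOfTwo

/-- The coefficient `α₁` of the paper. -/
noncomputable def alphaOne (h : ℕ) (α : ℝ) : ℝ :=
  min (((padicValNat 2 h : ℝ) - 1) / 2) (Real.log α / Real.log 4)

lemma alphaOne_nonneg {h : ℕ} {α : ℝ} (hν : 1 ≤ padicValNat 2 h) (hα : 1 ≤ α) :
    0 ≤ alphaOne h α := by
  have hν' : (1 : ℝ) ≤ padicValNat 2 h := by exact_mod_cast hν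
  exact le_min (by linarith) (div_nonneg (Real.log_nonneg hα) (Real.log_nonneg (by norm_num)))

lemma card_div_two_le_alphaOne {h : ℕ} {α : ℝ} (hh : h ≠ 0) (hν : 1 ≤ padicValNat 2 h)
    (hα : 1 ≤ α) {J : Finset ℕ} (hJ : ∀ j ∈ J, 2 ≤ j ∧ 2 ^ j ∣ h ∧ (2 : ℝ) ^ j < α) :
    (J.card : ℝ) / 2 ≤ alphaOne h α := by
  have hcard : ∀ N : ℕ, (∀ j ∈ J, j ≤ N) → J.card ≤ N - 1 := fun N hN => by
    have hsub : J ⊆ Finset.Icc 2 N := fun j hj => Finset.mem_Icc.2 ⟨(hJ j hj).1, hN j hj⟩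
    simpa using Finset.card_le_card hsub
  refine le_min ?_ ?_
  · have hle := hcard _ fun j hj => (padicValNat_dvd_iff_le hh).1 (hJ j hj).2.1
    have : (J.card : ℝ) + 1 ≤ padicValNat 2 h := by exact_mod_cast (by omega : J.card + 1 ≤ _)
    linarith
  · have hfloor : ∀ j ∈ J, j ≤ ⌊Real.logb 2 α⌋₊ := fun j hj => by
      refine Nat.le_floor ((Real.le_logb_iff_rpow_le one_lt_two (by linarith)).2 ?_)
      rw [Real.rpow_natCast]
      exact (hJ j hj).2.2.le
    have hle : (J.card : ℝ) ≤ Real.logb 2 α :=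
      (Nat.cast_le.2 ((hcard _ hfloor).trans (Nat.sub_le _ _))).trans
        (Nat.floor_le (Real.logb_nonneg one_lt_two hα))
    rw [Real.log_four_eq, mul_comm, ← div_div, Real.log_div_log]
    linarith

lemma alphaOne_ge_half {h : ℕ} {α : ℝ} (hh : h ≠ 0) (h4 : 4 ∣ h) (hα : 3 ≤ α) :
    1 / 2 ≤ alphaOne h α := by
  have hν : (2 : ℝ) ≤ padicValNat 2 h := by
    exact_mod_cast (padicValNat_dvd_iff_le hh).1 (show 2 ^ 2 ∣ h from h4)
  refine le_min (by linarith) ?_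
  rw [Real.log_four_eq, div_le_div_iff₀ two_pos (by positivity)]
  linarith [Real.log_le_log two_pos (by linarith : (2 : ℝ) ≤ α)]

end PowersOfTwo

section SmallPrimes

variable {q m p : ℕ} {y : ℝ}

lemma evenTerm_sub_two_le (hq : 5 ≤ q) :
    evenTerm q m (q - 2) ≤ Real.log q / (((q : ℝ) - 2) ^ 2 - 1) := by
  have hq' : (5 : ℝ) ≤ q := by exact_mod_cast hq
  have hcast : ((q - 2 : ℕ) : ℝ) = q - 2 := by rw [Nat.cast_sub (by omega), Nat.cast_two]
  refine (evenTerm_le (by omega)).trans ?_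
  rw [hcast]
  gcongr
  · nlinarith
  · linarith
  · linarith

lemma mul_log_le_log (hy : 0 < y) (hym : y ^ m = (q : ℝ) - 1) :
    m * Real.log y ≤ Real.log q := by
  rw [← Real.log_pow]
  exact Real.log_le_log (by positivity) (by linarith)

variable [Fact q.Prime]

lemma le_pow_of_gp_eq_two_mul (hm : 0 < m) (hym : y ^ m = (q : ℝ) - 1) {k : ℕ} (hk : 0 < k)
    (hg : gp q m p = 2 * k) : y ≤ (p : ℝ) ^ k := by
  have hle : (q : ℝ) ≤ (p : ℝ) ^ (m * k) + 1 := by exact_mod_cast le_pow_add_one_of_gp_eq hk hg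
  refine le_of_pow_le_pow_left₀ hm.ne' (by positivity) ?_
  rw [hym, ← pow_mul, mul_comm k m]
  linarith

lemma sum_evenTerm_le_of_gp_eq_two (hm : 0 < m) (hy : 1 < y) (hym : y ^ m = (q : ℝ) - 1)
    {s : Finset ℕ} (hs : ∀ p ∈ s, p.Prime ∧ p < q ∧ gp q m p = 2) :
    ∑ p ∈ s, evenTerm q m p ≤ Real.log q / (y ^ 2 - 1) := by
  have hy0 : 0 < y ^ 2 - 1 := by nlinarith
  have hcard : s.card ≤ m := by
    simpa using card_le_mul_totient_of_gp_eq hm two_pos 0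
      (fun p hp => Nat.div_eq_of_lt (hs p hp).2.1) fun p hp => (hs p hp).2.2
  calc ∑ p ∈ s, evenTerm q m p ≤ m * (Real.log y / (y ^ 2 - 1)) := by
        refine sum_le_mul_of_card_le (div_nonneg (Real.log_nonneg hy.le) hy0.le)
          (by exact_mod_cast hcard) fun p hp => ?_
        have hyp : y ≤ p := by
          simpa using le_pow_of_gp_eq_two_mul hm hym one_pos (hs p hp).2.2
        exact (evenTerm_le (hs p hp).1.two_le).trans
          (antitoneOn_log_div_sq_sub_one hy (hy.trans_le hyp) hyp)
    _ = m * Real.log y / (y ^ 2 - 1) := by rw [mul_div_assoc]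
    _ ≤ _ := by
        gcongr
        exact mul_log_le_log (by linarith) hym

lemma gp_one_ne_two (hq : q ≠ 2) (hq3 : q ≠ 3) (hp : p.Prime) (hpq : p < q) : gp q 1 p ≠ 2 := by
  intro hg
  have hle : q ≤ p + 1 := by simpa using le_pow_add_one_of_gp_eq (k := 1) one_pos hg
  obtain ⟨a, ha⟩ := (Fact.out : q.Prime).odd_of_ne_two hq
  rcases hp.eq_two_or_odd' with h2 | ⟨b, hb⟩ <;> omega

lemma evenTerm_le_of_gp_eq_two_mul (hm : 0 < m) (hy : 1 < y) (hym : y ^ m = (q : ℝ) - 1) {k : ℕ}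
    (hk : 2 ≤ k) (hg : gp q m p = 2 * k) :
    evenTerm q m p ≤ Real.log y / (y - y⁻¹) / k := by
  have hyp := le_pow_of_gp_eq_two_mul hm hym (by omega) hg
  have hanti := antitoneOn_log_div_sub_inv hy (hy.trans_le hyp) hyp
  simp only [Real.log_pow, mul_div_assoc] at hanti
  rw [evenTerm_of_gp_eq_two_mul hk hg, le_div_iff₀' (by positivity)]
  exact hanti

lemma sum_evenTerm_le_of_gp_eq_two_pow (hq : Odd q) (hm : 0 < m) (hy : 1 < y)
    (hym : y ^ m = (q : ℝ) - 1) {j : ℕ} (hj : 2 ≤ j) {s : Finset ℕ}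
    (hs : ∀ p ∈ s, p.Prime ∧ p < q ∧ p ≠ q - 2 ∧ gp q m p = 2 ^ j) :
    ∑ p ∈ s, evenTerm q m p ≤ Real.log q / 2 * (y / (y ^ 2 - 1)) := by
  obtain ⟨i, rfl⟩ : ∃ i, j = i + 1 := ⟨j - 1, by omega⟩
  have hy0 : 0 < y ^ 2 - 1 := by nlinarith
  have hsub : y - y⁻¹ = (y ^ 2 - 1) / y := by field_simp
  have hcard : 2 * s.card ≤ m * 2 ^ i := by
    simpa [Nat.totient_prime_pow_succ Nat.prime_two] using two_mul_card_le_mul_totient_of_gp_eq hq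
      hm (by positivity) (pow_dvd_pow 2 hj) hs
  have hcard' : (s.card : ℝ) ≤ m * 2 ^ i / 2 := by
    rw [le_div_iff₀' two_pos]
    exact_mod_cast hcard
  calc ∑ p ∈ s, evenTerm q m p
      ≤ m * 2 ^ i / 2 * (Real.log y / (y - y⁻¹) / (2 ^ i : ℕ)) := by
        refine sum_le_mul_of_card_le ?_ hcard' fun p hp =>
          evenTerm_le_of_gp_eq_two_mul hm hy hym (Nat.le_self_pow (by omega) 2)
            ((hs p hp).2.2.2.trans (pow_succ' 2 i))
        rw [hsub]
        have := Real.log_nonneg hy.le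
        positivity
    _ = m * Real.log y / 2 * (y / (y ^ 2 - 1)) := by
        rw [hsub]
        push_cast
        field_simp
    _ ≤ _ := by
        gcongr
        exact mul_log_le_log (by linarith) hym

lemma sum_evenTerm_le_of_gp_two_pow_lt {α : ℝ} (hq : Odd q) (hm : 0 < m) (hy : 1 < y)
    (hym : y ^ m = (q : ℝ) - 1) {h : ℕ} (hh : h ≠ 0) (hν : 1 ≤ padicValNat 2 h) (hα : 1 ≤ α)
    {s : Finset ℕ} (hs : ∀ p ∈ s, p.Prime ∧ p < q ∧ p ≠ q - 2 ∧
      ∃ j, 2 ≤ j ∧ gp q m p = 2 ^ j ∧ 2 ^ j ∣ h ∧ (2 : ℝ) ^ j < α) :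
    ∑ p ∈ s, evenTerm q m p ≤ alphaOne h α * (Real.log q * (y / (y ^ 2 - 1))) := by
  set J := s.image fun p => Nat.log 2 (gp q m p)
  have hJmem : ∀ j ∈ J, 2 ≤ j ∧ 2 ^ j ∣ h ∧ (2 : ℝ) ^ j < α :=
    Finset.forall_mem_image.2 fun p hp => by
      obtain ⟨-, -, -, i, hi, hgp, hdvd, hlt⟩ := hs p hp
      rw [hgp, Nat.log_pow one_lt_two]
      exact ⟨hi, hdvd, hlt⟩
  have hy0 : 0 < y ^ 2 - 1 := by nlinarith
  calc ∑ p ∈ s, evenTerm q m p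
      = ∑ j ∈ J, ∑ p ∈ s with Nat.log 2 (gp q m p) = j, evenTerm q m p :=
        (Finset.sum_fiberwise_of_maps_to (fun p hp => Finset.mem_image_of_mem _ hp) _).symm
    _ ≤ ∑ j ∈ J, Real.log q / 2 * (y / (y ^ 2 - 1)) := by
        refine Finset.sum_le_sum fun j hj =>
          sum_evenTerm_le_of_gp_eq_two_pow hq hm hy hym (hJmem j hj).1 fun p hp => ?_
        obtain ⟨hps, hlog⟩ := Finset.mem_filter.1 hp
        obtain ⟨hprime, hpq, hpq2, i, -, hgp, -⟩ := hs p hps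
        rw [hgp, Nat.log_pow one_lt_two] at hlog
        exact ⟨hprime, hpq, hpq2, hlog ▸ hgp⟩
    _ = (J.card : ℝ) / 2 * (Real.log q * (y / (y ^ 2 - 1))) := by
        rw [Finset.sum_const, nsmul_eq_mul]
        ring
    _ ≤ _ := mul_le_mul_of_nonneg_right (card_div_two_le_alphaOne hh hν hα hJmem) (by positivity)

end SmallPrimes

section LargePrimes

variable {q m p : ℕ} [Fact q.Prime]

lemma log_div_sq_sub_one_le_log_div_sq {x a : ℝ} (ha : 2 ≤ a) (hax : a + 1 ≤ x) :
    Real.log x / (x ^ 2 - 1) ≤ Real.log a / a ^ 2 := by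
  refine (antitoneOn_log_div_sq_sub_one (show (1 : ℝ) < a + 1 by linarith)
    (show 1 < x by linarith) hax).trans ?_
  have hlog : 1 / 2 ≤ Real.log a := by
    linarith [Real.log_two_gt_d9, Real.log_le_log two_pos ha]
  have hsucc : Real.log (a + 1) * a ≤ Real.log a * a + 1 := by
    have := log_add_sub_log_le (show 0 < a by linarith) zero_le_one
    rw [le_div_iff₀ (by linarith)] at this
    linarith
  change Real.log (a + 1) / ((a + 1) ^ 2 - 1) ≤ _
  rw [div_le_div_iff₀ (by nlinarith) (by positivity)]
  nlinarith

lemma evenTerm_le_of_div_eq (hp : p.Prime) {j : ℕ} (hj : 0 < j) (hpj : p / q = j)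
    (hpq : q < p) : evenTerm q m p ≤ Real.log (j * q) / (j * q : ℝ) ^ 2 := by
  have hq := (Fact.out : q.Prime)
  have hmod : 0 < p % q := Nat.pos_of_ne_zero fun h0 => by
    rcases (Nat.dvd_prime hp).1 (Nat.dvd_of_mod_eq_zero h0) with h | h
    · exact hq.one_lt.ne' h
    · omega
  have hle : j * q + 1 ≤ p := by
    have := Nat.div_add_mod p q
    rw [hpj, mul_comm] at this
    omega
  have hjq : 2 ≤ j * q := hq.two_le.trans (Nat.le_mul_of_pos_left q hj)
  exact (evenTerm_le hp.two_le).trans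
    (log_div_sq_sub_one_le_log_div_sq (by exact_mod_cast hjq) (by exact_mod_cast hle))

lemma sum_evenTerm_le_of_lt_of_gp_eq (hm : 0 < m) {g : ℕ} (hg : 0 < g) {s : Finset ℕ}
    (hs : ∀ p ∈ s, p.Prime ∧ q < p ∧ gp q m p = g) :
    ∑ p ∈ s, evenTerm q m p
      ≤ m * g.totient * ((5 / 3 * Real.log q + 1.13) / (q : ℝ) ^ 2) := by
  have hq := (Fact.out : q.Prime)
  have hmaps : ∀ p ∈ s, p / q ∈ Finset.Icc 1 (s.sup id) := fun p hp =>
    Finset.mem_Icc.2 ⟨(Nat.one_le_div_iff hq.pos).2 (hs p hp).2.1.le,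
      (Nat.div_le_self _ _).trans (Finset.le_sup (f := id) hp)⟩
  calc ∑ p ∈ s, evenTerm q m p
      = ∑ j ∈ Finset.Icc 1 (s.sup id), ∑ p ∈ s with p / q = j, evenTerm q m p :=
        (Finset.sum_fiberwise_of_maps_to hmaps _).symm
    _ ≤ ∑ j ∈ Finset.Icc 1 (s.sup id),
          m * g.totient * (Real.log (j * q) / (j * q : ℝ) ^ 2) := by
        refine Finset.sum_le_sum fun j hj => sum_le_mul_of_card_le ?_ ?_ fun p hp => ?_
        · exact div_nonneg (by exact_mod_cast Real.log_natCast_nonneg (j * q)) (sq_nonneg _)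
        · exact_mod_cast card_le_mul_totient_of_gp_eq hm hg j
            (fun p hp => (Finset.mem_filter.1 hp).2)
            fun p hp => (hs p (Finset.mem_filter.1 hp).1).2.2
        · obtain ⟨hps, hpj⟩ := Finset.mem_filter.1 hp
          exact evenTerm_le_of_div_eq (hs p hps).1 (Finset.mem_Icc.1 hj).1 hpj (hs p hps).2.1
    _ = m * g.totient * ∑ j ∈ Finset.Icc 1 (s.sup id), Real.log (j * q) / (j * q : ℝ) ^ 2 := by
        rw [Finset.mul_sum]
    _ ≤ _ := by
        gcongr
        exact sum_Icc_log_mul_div_sq_le (by exact_mod_cast hq.one_le) _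

lemma sum_evenTerm_le_of_lt_of_six_le_gp (hq : Odd q) {s : Finset ℕ}
    (hs : ∀ p ∈ s, p.Prime ∧ q < p ∧ 6 ≤ gp q m p) :
    ∑ p ∈ s, evenTerm q m p ≤ (Real.log q + 1) / (2 * (q - 1)) / q := by
  have hq2 := (Fact.out : q.Prime).two_le
  have hodd : ∀ p ∈ s, Odd p ∧ q ≤ p := fun p hp =>
    ⟨(hs p hp).1.odd_of_ne_two (by have := (hs p hp).2.1; omega), (hs p hp).2.1.le⟩
  calc ∑ p ∈ s, evenTerm q m p ≤ ∑ p ∈ s, Real.log p / ((p : ℝ) ^ 2 - 1) / q := by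
        refine Finset.sum_le_sum fun p hp =>
          (evenTerm_le_div_of_six_le_gp (hs p hp).1.two_le (hs p hp).2.2).trans ?_
        gcongr
        · exact log_div_sq_sub_one_nonneg p
        · exact (hs p hp).2.1.le
    _ = (∑ p ∈ s, Real.log p / ((p : ℝ) ^ 2 - 1)) / q := by rw [Finset.sum_div]
    _ ≤ _ := by
        gcongr
        exact sum_odd_log_div_sq_sub_one_le hq2 hq hodd

end LargePrimes

section NotTwoPow

lemma exists_eq_two_mul_odd_mul {n : ℕ} (hn : n ≠ 0) (heven : Even n) (hpow : ∀ j, n ≠ 2 ^ j) :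
    ∃ l k, Odd l ∧ 1 < l ∧ 0 < k ∧ n = 2 * (l * k) ∧ (n % 4 ≠ 2 → 2 ≤ k) := by
  obtain ⟨k, l, hl, hkl⟩ := Nat.exists_eq_two_pow_mul_odd hn
  obtain ⟨c, rfl⟩ := hl
  obtain ⟨d, hd⟩ := heven.two_dvd
  have hc : c ≠ 0 := by
    rintro rfl
    exact hpow k (by simpa using hkl)
  obtain ⟨b, rfl⟩ : ∃ b, k = b + 1 := Nat.exists_eq_add_one_of_ne_zero fun hk => by
    rw [hk] at hkl
    omega
  refine ⟨2 * c + 1, 2 ^ b, ⟨c, rfl⟩, by omega, by positivity, by rw [hkl]; ring, fun h4 => ?_⟩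
  refine Nat.le_self_pow (fun hb => h4 ?_) 2
  rw [hkl, hb]
  omega

variable {q m p : ℕ} [Fact q.Prime] {z : ℝ}

lemma evenTerm_le_of_odd_factor (hm : 0 < m) (hz : 1 < z) (hzm : z ^ m = q) {l k : ℕ}
    (hp : 2 ≤ p) (hl : Odd l) (hl1 : 1 < l) (hk : 0 < k) (hg : gp q m p = 2 * (l * k)) :
    evenTerm q m p ≤ 64 / 63 / z * (Real.log p / (p : ℝ) ^ k) := by
  have hlk : 3 ≤ l * k :=
    le_trans (by obtain ⟨a, rfl⟩ := hl; omega) (Nat.le_mul_of_pos_right l hk)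
  rw [evenTerm_of_gp_eq_two_mul (by omega) hg]
  set X : ℝ := (p : ℝ) ^ (l * k) with hX
  have hX8 : 8 ≤ X :=
    calc (8 : ℝ) = 2 ^ 3 := by norm_num
      _ ≤ 2 ^ (l * k) := pow_le_pow_right₀ one_le_two hlk
      _ ≤ X := pow_le_pow_left₀ zero_le_two (by exact_mod_cast hp) _
  have hzX : z * (p : ℝ) ^ k ≤ X := by
    refine le_of_pow_le_pow_left₀ hm.ne' (by positivity) ?_
    rw [mul_pow, hzm, hX, ← pow_mul, ← pow_mul, mul_comm k m, mul_comm (l * k) m]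
    exact_mod_cast mul_pow_le_pow_of_gp_eq hl hl1 hk hg
  have hXinv : X⁻¹ ≤ X / 64 := by
    rw [inv_le_iff_one_le_mul₀ (by linarith)]
    nlinarith
  calc Real.log p / (X - X⁻¹) ≤ Real.log p / (63 / 64 * (z * (p : ℝ) ^ k)) := by
        refine div_le_div_of_nonneg_left (Real.log_natCast_nonneg p) ?_ (by linarith)
        have : 0 < p := by omega
        positivity
    _ = _ := by field_simp

lemma exists_evenTerm_le_of_gp_ne_two_pow (hm : 0 < m) (hz : 1 < z) (hzm : z ^ m = q)
    (hp : 2 ≤ p) (hg : ∀ j, gp q m p ≠ 2 ^ j) :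
    ∃ k, 0 < k ∧ (gp q m p % 4 ≠ 2 → 2 ≤ k) ∧
      evenTerm q m p ≤ 64 / 63 / z * (Real.log p / (p : ℝ) ^ k) := by
  by_cases hzero : evenTerm q m p = 0
  · refine ⟨2, two_pos, fun _ => le_rfl, hzero.trans_le ?_⟩
    have := Real.log_natCast_nonneg p
    positivity
  · have hg0 : gp q m p ≠ 0 := fun h0 => hzero (by simp [evenTerm, h0])
    have heven : Even (gp q m p) := by
      by_contra hodd
      exact hzero (evenTerm_of_odd_gp (Nat.not_even_iff_odd.1 hodd))
    obtain ⟨l, k, hl, hl1, hk, hlk, hk2⟩ := exists_eq_two_mul_odd_mul hg0 heven hg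
    exact ⟨k, hk, hk2, evenTerm_le_of_odd_factor hm hz hzm hp hl hl1 hk hlk⟩

lemma evenTerm_le_of_gp_ne_two_pow (hm : 0 < m) (hz : 1 < z) (hzm : z ^ m = q)
    (hp : 2 ≤ p) (hg : ∀ j, gp q m p ≠ 2 ^ j) :
    evenTerm q m p ≤ 64 / 63 / z * (Real.log p / p) := by
  obtain ⟨k, hk, -, hle⟩ := exists_evenTerm_le_of_gp_ne_two_pow hm hz hzm hp hg
  refine hle.trans ?_
  have hp1 : (1 : ℝ) ≤ p := by exact_mod_cast (by omega : 1 ≤ p)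
  gcongr
  exact le_self_pow₀ hp1 hk.ne'

lemma evenTerm_le_of_gp_mod_four_ne_two (hm : 0 < m) (hz : 1 < z) (hzm : z ^ m = q)
    (hp : 2 ≤ p) (hg : ∀ j, gp q m p ≠ 2 ^ j) (hg4 : gp q m p % 4 ≠ 2) :
    evenTerm q m p ≤ 64 / 63 / z * (Real.log p / ((p : ℝ) ^ 2 - 1)) := by
  obtain ⟨k, -, hk2, hle⟩ := exists_evenTerm_le_of_gp_ne_two_pow hm hz hzm hp hg
  refine hle.trans ?_
  have hp2 : (2 : ℝ) ≤ p := by exact_mod_cast hp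
  gcongr
  · nlinarith
  · exact (sub_le_self _ zero_le_one).trans (pow_le_pow_right₀ (by linarith) (hk2 hg4))

lemma card_le_of_gp_eq_four_mul_add_two (hm : 0 < m) {i : ℕ} (hi : 0 < i) {s : Finset ℕ}
    (hs : ∀ p ∈ s, p < q ∧ gp q m p = 2 * (2 * i + 1)) : s.card ≤ m * (i * 2) := by
  refine (card_le_mul_totient_of_gp_eq hm (g := 2 * (2 * i + 1)) (by omega) 0
    (fun p hp => Nat.div_eq_of_lt (hs p hp).1) fun p hp => (hs p hp).2).trans ?_
  have htot := Nat.totient_lt (2 * i + 1) (by omega)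
  rw [Nat.totient_mul (by simp), Nat.totient_two, one_mul]
  gcongr
  omega

lemma card_le_of_gp_mod_four_eq_two {α : ℝ} (hm : 0 < m) (hα : 2 ≤ α) {s : Finset ℕ}
    (hs : ∀ p ∈ s, p < q ∧ gp q m p % 4 = 2 ∧ gp q m p ≠ 2 ∧ (gp q m p : ℝ) < α) :
    (s.card : ℝ) ≤ m * α ^ 2 / 16 := by
  set r := ⌊(α - 2) / 4⌋₊
  have hr : (r : ℝ) ≤ (α - 2) / 4 := Nat.floor_le (by linarith)
  have hmaps : ∀ p ∈ s, gp q m p / 4 ∈ Finset.range (r + 1) := fun p hp => by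
    obtain ⟨-, hmod, -, hlt⟩ := hs p hp
    rw [Finset.mem_range, Nat.lt_succ_iff]
    refine Nat.le_floor ?_
    have hdiv : (4 : ℝ) * (gp q m p / 4 : ℕ) + 2 = gp q m p := by
      exact_mod_cast (by omega : 4 * (gp q m p / 4) + 2 = gp q m p)
    linarith
  have hcard : s.card ≤ m * (r * (r + 1)) :=
    calc s.card = ∑ i ∈ Finset.range (r + 1), (s.filter fun p => gp q m p / 4 = i).card :=
          Finset.card_eq_sum_card_fiberwise hmaps
      _ ≤ ∑ i ∈ Finset.range (r + 1), m * (i * 2) := by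
          refine Finset.sum_le_sum fun i _ => ?_
          have hfib : ∀ p ∈ s.filter fun p => gp q m p / 4 = i,
              p < q ∧ gp q m p = 2 * (2 * i + 1) ∧ 0 < i := fun p hp => by
            obtain ⟨hps, hpi⟩ := Finset.mem_filter.1 hp
            obtain ⟨hpq, hmod, hne, -⟩ := hs p hps
            exact ⟨hpq, by omega, by omega⟩
          rcases Finset.eq_empty_or_nonempty (s.filter fun p => gp q m p / 4 = i) with h | ⟨p, hp⟩
          · simp [h]
          · exact card_le_of_gp_eq_four_mul_add_two hm (hfib p hp).2.2 fun p hp =>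
              ⟨(hfib p hp).1, (hfib p hp).2.1⟩
      _ = m * (r * (r + 1)) := by
          rw [← Finset.mul_sum, ← Finset.sum_mul, Finset.sum_range_id_mul_two, Nat.add_sub_cancel,
            mul_comm r]
  have hrα : (r : ℝ) * (r + 1) ≤ α ^ 2 / 16 := by nlinarith [Nat.cast_nonneg (α := ℝ) r]
  calc (s.card : ℝ) ≤ m * (r * (r + 1)) := by exact_mod_cast hcard
    _ ≤ m * (α ^ 2 / 16) := by gcongr
    _ = _ := by ring

lemma mertens_remainder_le {x : ℝ} (hx : 98 ≤ x) :
    Real.log ⌊x⌋₊ + (Real.log ⌊x⌋₊ + 1) / ⌊x⌋₊ + Real.log 4 - 1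
      + (Real.log (97 : ℕ) + 1) / (2 * (((97 : ℕ) : ℝ) - 1)) + 1 / 8 * Real.log x
      ≤ 9 / 8 * Real.log (2 * x) := by
  have hn : (98 : ℝ) ≤ ⌊x⌋₊ := by exact_mod_cast Nat.le_floor (n := 98) (by exact_mod_cast hx)
  have hnx : (⌊x⌋₊ : ℝ) ≤ x := Nat.floor_le (by linarith)
  set n : ℝ := (⌊x⌋₊ : ℝ)
  have hlog2 := Real.log_two_lt_d9
  have hlog2' := Real.log_two_gt_d9
  have hlog128 : Real.log 128 = 7 * Real.log 2 := by
    rw [show (128 : ℝ) = 2 ^ 7 by norm_num, Real.log_pow]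
    norm_num
  have hlog98 : Real.log 98 ≤ Real.log 128 := Real.log_le_log (by norm_num) (by norm_num)
  have hlog97 : Real.log (97 : ℕ) ≤ Real.log 128 := Real.log_le_log (by norm_num) (by norm_num)
  have hlogn : Real.log n ≤ Real.log 98 + (n - 98) / 98 := by
    have := log_add_sub_log_le (show (0 : ℝ) < 98 by norm_num) (show 0 ≤ n - 98 by linarith)
    rw [add_sub_cancel] at this
    linarith
  have hfrac : (Real.log n + 1) / n ≤ 0.06 := by
    rw [div_le_iff₀ (by linarith)]
    linarith
  have hfrac97 : (Real.log (97 : ℕ) + 1) / (2 * (((97 : ℕ) : ℝ) - 1)) ≤ 0.031 := by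
    rw [div_le_iff₀ (by norm_num)]
    push_cast at hlog97 ⊢
    linarith
  have hlognx : Real.log n ≤ Real.log x := Real.log_le_log (by linarith) hnx
  rw [Real.log_mul two_ne_zero (by linarith), Real.log_four_eq]
  linarith

lemma sum_evenTerm_le_of_ne_two_pow_of_le (hm : 0 < m) (hz : 1 < z) (hzm : z ^ m = q) {n : ℕ}
    (hn : 1 ≤ n) {s : Finset ℕ}
    (hs : ∀ p ∈ s, p.Prime ∧ (∀ j, gp q m p ≠ 2 ^ j) ∧ p ≤ n) :
    ∑ p ∈ s, evenTerm q m p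
      ≤ 64 / 63 / z * (Real.log n + (Real.log n + 1) / n + Real.log 4 - 1) :=
  calc ∑ p ∈ s, evenTerm q m p ≤ ∑ p ∈ s, 64 / 63 / z * (Real.log p / p) :=
        Finset.sum_le_sum fun p hp =>
          evenTerm_le_of_gp_ne_two_pow hm hz hzm (hs p hp).1.two_le (hs p hp).2.1
    _ = 64 / 63 / z * ∑ p ∈ s, Real.log p / p := by rw [Finset.mul_sum]
    _ ≤ 64 / 63 / z * ∑ p ∈ n.primesLE, Real.log p / p := by
        gcongr
        exact fun p hp => Nat.mem_primesLE.2 ⟨(hs p hp).2.2, (hs p hp).1⟩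
    _ ≤ _ := by
        gcongr
        exact sum_primesLE_log_div_le hn

lemma sum_evenTerm_le_of_mod_four_eq_two (hm : 0 < m) (hz : 1 < z) (hzm : z ^ m = q) {α x : ℝ}
    (hα : 2 ≤ α) (hx : m * α ^ 2 / 2 = x) (hx3 : 3 ≤ x) {s : Finset ℕ}
    (hs : ∀ p ∈ s, p.Prime ∧ p < q ∧ (∀ j, gp q m p ≠ 2 ^ j) ∧ (gp q m p : ℝ) < α ∧
      gp q m p % 4 = 2 ∧ x ≤ p) :
    ∑ p ∈ s, evenTerm q m p ≤ 64 / 63 / z * (1 / 8 * Real.log x) := by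
  have hexp : Real.exp 1 ≤ x := by linarith [Real.exp_one_lt_d9]
  have hlog : 0 ≤ Real.log x := Real.log_nonneg (by linarith)
  have hcard : (s.card : ℝ) ≤ m * α ^ 2 / 16 :=
    card_le_of_gp_mod_four_eq_two hm hα fun p hp => by
      obtain ⟨-, hpq, hpow, hlt, hmod, -⟩ := hs p hp
      exact ⟨hpq, hmod, hpow 1, hlt⟩
  calc ∑ p ∈ s, evenTerm q m p ≤ m * α ^ 2 / 16 * (64 / 63 / z * (Real.log x / x)) := by
        refine sum_le_mul_of_card_le (by positivity) hcard fun p hp => ?_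
        obtain ⟨hp, -, hpow, -, -, hxp⟩ := hs p hp
        refine (evenTerm_le_of_gp_ne_two_pow hm hz hzm hp.two_le hpow).trans ?_
        refine mul_le_mul_of_nonneg_left ?_ (by positivity)
        exact Real.log_div_self_antitoneOn hexp (hexp.trans hxp) hxp
    _ = x / 8 * (64 / 63 / z * (Real.log x / x)) := by
        rw [← hx]
        ring
    _ = _ := by field_simp

lemma sum_evenTerm_le_of_mod_four_ne_two (hm : 0 < m) (hz : 1 < z) (hzm : z ^ m = q) {N : ℕ}
    (hN : 2 ≤ N) (hNodd : Odd N) {s : Finset ℕ}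
    (hs : ∀ p ∈ s, p.Prime ∧ (∀ j, gp q m p ≠ 2 ^ j) ∧ gp q m p % 4 ≠ 2 ∧ N ≤ p) :
    ∑ p ∈ s, evenTerm q m p ≤ 64 / 63 / z * ((Real.log N + 1) / (2 * (N - 1))) :=
  calc ∑ p ∈ s, evenTerm q m p ≤ ∑ p ∈ s, 64 / 63 / z * (Real.log p / ((p : ℝ) ^ 2 - 1)) :=
        Finset.sum_le_sum fun p hp =>
          evenTerm_le_of_gp_mod_four_ne_two hm hz hzm (hs p hp).1.two_le (hs p hp).2.1
            (hs p hp).2.2.1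
    _ = 64 / 63 / z * ∑ p ∈ s, Real.log p / ((p : ℝ) ^ 2 - 1) := by rw [Finset.mul_sum]
    _ ≤ _ := by
        gcongr
        refine sum_odd_log_div_sq_sub_one_le hN hNodd fun p hp => ?_
        obtain ⟨hprime, -, -, hNp⟩ := hs p hp
        refine ⟨hprime.odd_of_ne_two ?_, hNp⟩
        obtain ⟨a, rfl⟩ := hNodd
        omega

/-- Mertens' bound serves for `p ≤ x = m * α ^ 2 / 2`. Beyond `x`, the primes with `gp % 4 = 2` are
few, and for the others `log p / p` improves to `log p / p ^ 2`. -/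
lemma sum_evenTerm_le_of_gp_ne_two_pow {α : ℝ} (hm : 0 < m) (hz : 1 < z) (hzm : z ^ m = q)
    (hα : 14 ≤ α) {s : Finset ℕ}
    (hs : ∀ p ∈ s, p.Prime ∧ p < q ∧ (∀ j, gp q m p ≠ 2 ^ j) ∧ (gp q m p : ℝ) < α) :
    ∑ p ∈ s, evenTerm q m p ≤ 8 / 7 * Real.log (m * α ^ 2) / z := by
  have hm' : (1 : ℝ) ≤ m := by exact_mod_cast hm
  obtain ⟨x, hx⟩ : ∃ x : ℝ, m * α ^ 2 / 2 = x := ⟨_, rfl⟩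
  have hx98 : 98 ≤ x := by
    rw [← hx]
    nlinarith
  have hn98 : 98 ≤ ⌊x⌋₊ := Nat.le_floor (by exact_mod_cast hx98)
  have hle := sum_evenTerm_le_of_ne_two_pow_of_le hm hz hzm (n := ⌊x⌋₊) (by omega)
    (s := s.filter (· ≤ ⌊x⌋₊)) fun p hp => by
      obtain ⟨hps, hpn⟩ := Finset.mem_filter.1 hp
      exact ⟨(hs p hps).1, (hs p hps).2.2.1, hpn⟩
  have htwo := sum_evenTerm_le_of_mod_four_eq_two hm hz hzm (by linarith) hx (by linarith)
    (s := (s.filter (¬ · ≤ ⌊x⌋₊)).filter (gp q m · % 4 = 2)) fun p hp => by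
      obtain ⟨⟨hps, hpn⟩, hmod⟩ := by simpa only [Finset.mem_filter] using hp
      obtain ⟨hprime, hpq, hpow, hlt⟩ := hs p hps
      exact ⟨hprime, hpq, hpow, hlt, hmod, (Nat.lt_of_floor_lt (not_le.1 hpn)).le⟩
  have hnetwo := sum_evenTerm_le_of_mod_four_ne_two hm hz hzm (N := 97) (by norm_num) (by decide)
    (s := (s.filter (¬ · ≤ ⌊x⌋₊)).filter (¬ gp q m · % 4 = 2)) fun p hp => by
      obtain ⟨⟨hps, hpn⟩, hmod⟩ := by simpa only [Finset.mem_filter] using hp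
      exact ⟨(hs p hps).1, (hs p hps).2.2.1, hmod, by omega⟩
  have hrem := mul_le_mul_of_nonneg_left (mertens_remainder_le hx98)
    (show 0 ≤ 64 / 63 / z by positivity)
  rw [← Finset.sum_filter_add_sum_filter_not s (· ≤ ⌊x⌋₊),
    ← Finset.sum_filter_add_sum_filter_not (s.filter (¬ · ≤ ⌊x⌋₊)) (gp q m · % 4 = 2)]
  calc _ ≤ _ := by linarith
    _ ≤ 64 / 63 / z * (9 / 8 * Real.log (2 * x)) := hrem
    _ = 8 / 7 * Real.log (m * α ^ 2) / z := by
        rw [← hx]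
        ring_nf

end NotTwoPow

section Tail

/-- Bound for the contribution to `S(m,q)` of the primes `p > q` whose order `gp q m p` is `2` or at
least `6`. -/
noncomputable def tailBase (q m : ℕ) : ℝ :=
  m * ((5 / 3 * Real.log q + 1.13) / (q : ℝ) ^ 2) + (Real.log q + 1) / (2 * (q - 1)) / q

/-- Bound for the contribution to `S(m,q)` of the primes `p > q` of order `4` and of `p = q - 2`,
which is present only if `4 ∣ h`. -/
noncomputable def tailFour (q m : ℕ) : ℝ :=
  m * 2 * ((5 / 3 * Real.log q + 1.13) / (q : ℝ) ^ 2) + Real.log q / (((q : ℝ) - 2) ^ 2 - 1)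

variable {q m : ℕ} {y β : ℝ}

lemma tailBase_le (hq : 17 ≤ q) : tailBase q m ≤
    (m * (5 / 3 * Real.log q + 1.13) + 0.532 * (Real.log q + 1)) / (q : ℝ) ^ 2 := by
  have hq' : (17 : ℝ) ≤ q := by exact_mod_cast hq
  have hlog := Real.log_natCast_nonneg q
  rw [tailBase, ← mul_div_assoc, add_div (_ * _), add_le_add_iff_left, div_div,
    div_le_div_iff₀ (by nlinarith) (by positivity)]
  have : (q : ℝ) ^ 2 ≤ 0.532 * (2 * (q - 1) * q) := by nlinarith
  nlinarith

lemma tailFour_nonneg (hq : 17 ≤ q) : 0 ≤ tailFour q m := by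
  have hq' : (17 : ℝ) ≤ q := by exact_mod_cast hq
  have hsq : 0 ≤ ((q : ℝ) - 2) ^ 2 - 1 := by nlinarith
  unfold tailFour
  positivity

lemma tailFour_le (hq : 17 ≤ q) : tailFour q m ≤
    (m * 2 * (5 / 3 * Real.log q + 1.13) + 1.2903 * Real.log q) / (q : ℝ) ^ 2 := by
  have hq' : (17 : ℝ) ≤ q := by exact_mod_cast hq
  have hlog := Real.log_natCast_nonneg q
  rw [tailFour, ← mul_div_assoc, add_div (_ * _ * _), add_le_add_iff_left,
    div_le_div_iff₀ (by nlinarith) (by positivity)]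
  have : (q : ℝ) ^ 2 ≤ 1.2903 * (((q : ℝ) - 2) ^ 2 - 1) := by nlinarith
  nlinarith

lemma tailBase_add_tailFour_le (hq : 17 ≤ q) : tailBase q m + tailFour q m ≤
    (3 * (m * (5 / 3 * Real.log q + 1.13)) + 1.8223 * Real.log q + 0.532) / (q : ℝ) ^ 2 := by
  refine (add_le_add (tailBase_le hq) (tailFour_le hq)).trans_eq ?_
  ring

lemma mul_div_sq_le_div_sub {x a c : ℝ} (ha : 0 ≤ a) (hax : a < x) (hc : 0 ≤ c) :
    c * x / x ^ 2 ≤ c / (x - a) := by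
  rw [sq, mul_div_mul_right _ _ (by linarith)]
  gcongr
  linarith

lemma natCast_le_mul_log {c : ℝ} (hy : 0 < y) (hym : y ^ m = (q : ℝ) - 1) (hc : 0 ≤ c)
    (hcy : 1 ≤ c * Real.log y) : (m : ℝ) ≤ c * Real.log q :=
  calc (m : ℝ) ≤ m * (c * Real.log y) := le_mul_of_one_le_right m.cast_nonneg hcy
    _ = c * (m * Real.log y) := by ring
    _ ≤ c * Real.log q := by
        gcongr
        exact mul_log_le_log hy hym

lemma log_bounds_of_le {x : ℝ} (hx : 29 ≤ x) :
    3.327 ≤ Real.log x ∧ Real.log x ≤ 0.1166 * x ∧ Real.log x ^ 2 ≤ 0.3938 * x := by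
  have hlo : 24 * Real.log 2 ≤ 5 * Real.log 29 := by
    have : Real.log (2 ^ 24) ≤ Real.log (29 ^ 5) := Real.log_le_log (by norm_num) (by norm_num)
    simpa only [Real.log_pow, Nat.cast_ofNat] using this
  have hhi : 8 * Real.log 29 ≤ 39 * Real.log 2 := by
    have : Real.log (29 ^ 8) ≤ Real.log (2 ^ 39) := Real.log_le_log (by norm_num) (by norm_num)
    simpa only [Real.log_pow, Nat.cast_ofNat] using this
  have hlog2 := Real.log_two_gt_d9
  have hlog2' := Real.log_two_lt_d9
  have hexp := Real.exp_one_lt_d9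
  have hmono : Real.log 29 ≤ Real.log x := Real.log_le_log (by norm_num) hx
  have hdiv : Real.log x / x ≤ Real.log 29 / 29 :=
    Real.log_div_self_antitoneOn (show Real.exp 1 ≤ 29 by linarith)
      (show Real.exp 1 ≤ x by linarith) hx
  have hexp2 : Real.exp 2 ≤ 29 := by
    rw [← one_add_one_eq_two, Real.exp_add]
    nlinarith [Real.exp_pos 1]
  have hsqrt : Real.log x / √x ≤ Real.log 29 / √29 :=
    Real.log_div_sqrt_antitoneOn hexp2 (hexp2.trans hx) hx
  have hsq : Real.log x ^ 2 / x ≤ Real.log 29 ^ 2 / 29 := by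
    have := pow_le_pow_left₀ (div_nonneg (by linarith) (Real.sqrt_nonneg x)) hsqrt 2
    rwa [div_pow, div_pow, Real.sq_sqrt (by linarith), Real.sq_sqrt (by norm_num)] at this
  refine ⟨by linarith, (div_le_iff₀ (by linarith)).1 (hdiv.trans ?_),
    (div_le_iff₀ (by linarith)).1 (hsq.trans ?_)⟩
  · linarith
  · have : Real.log 29 ^ 2 ≤ 3.3792 ^ 2 := pow_le_pow_left₀ (by linarith) (by linarith) 2
    linarith

lemma tailBase_le_of_le (hq : 29 ≤ q) (hy : 1 < y) (hym : y ^ m = (q : ℝ) - 1)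
    (hlog : m ≠ 1 → Real.log q / (y ^ 2 - 1) ≤ 0.76) : tailBase q m ≤ 1.053 / ((q : ℝ) - 2.1) := by
  have hq' : (29 : ℝ) ≤ q := by exact_mod_cast hq
  obtain ⟨hL, hLq, hL2⟩ := log_bounds_of_le hq'
  have hm : (m : ℝ) ≤ 1.203 * Real.log q := by
    rcases eq_or_ne m 1 with rfl | hm1
    · rw [Nat.cast_one]
      linarith
    · refine natCast_le_mul_log (by linarith) hym (by norm_num) ?_
      have hy2 : 5.377 ≤ y ^ 2 := by
        have := (div_le_iff₀ (by nlinarith)).1 (hlog hm1)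
        linarith
      have hlogy : Real.log (2 ^ 12) ≤ Real.log ((y ^ 2) ^ 5) :=
        Real.log_le_log (by norm_num)
          (le_trans (by norm_num) (pow_le_pow_left₀ (by norm_num) hy2 5))
      simp only [Real.log_pow, Nat.cast_ofNat] at hlogy
      linarith [Real.log_two_gt_d9]
  refine (tailBase_le (by omega)).trans
    (le_trans ?_ (mul_div_sq_le_div_sub (by norm_num) (by linarith) (by norm_num)))
  gcongr
  nlinarith [mul_le_mul_of_nonneg_right hm (show 0 ≤ 5 / 3 * Real.log q + 1.13 by linarith)]

lemma tailBase_one_add_tailFour_one_le (hq : 29 ≤ q) :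
    tailBase q 1 + tailFour q 1 ≤ 1.053 / ((q : ℝ) - 2.1) := by
  have hq' : (29 : ℝ) ≤ q := by exact_mod_cast hq
  obtain ⟨-, hLq, -⟩ := log_bounds_of_le hq'
  refine (tailBase_add_tailFour_le (by omega)).trans
    (le_trans ?_ (mul_div_sq_le_div_sub (by norm_num) (by linarith) (by norm_num)))
  gcongr
  rw [Nat.cast_one]
  linarith

lemma tailBase_add_tailFour_le_of_le (hq : 29 ≤ q) (hm : 2 ≤ m) (hy : 1 < y)
    (hym : y ^ m = (q : ℝ) - 1) (hlog : 2 * (Real.log q / (y ^ 2 - 1)) ≤ 0.76) :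
    tailBase q m + tailFour q m
      ≤ 1 / 2 * (Real.log q / (y ^ 2 - 1)) + 1.053 / ((q : ℝ) - 2.1) := by
  have hq' : (29 : ℝ) ≤ q := by exact_mod_cast hq
  obtain ⟨hL, hLq, hL2⟩ := log_bounds_of_le hq'
  have hy0 : 0 < y ^ 2 - 1 := by nlinarith
  have hm' : (m : ℝ) ≤ 0.97 * Real.log q := by
    refine natCast_le_mul_log (by linarith) hym (by norm_num) ?_
    have hy2 : 2 ^ 3 ≤ y ^ 2 := by
      rw [← mul_div_assoc, div_le_iff₀ hy0] at hlog
      linarith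
    have hlogy : Real.log (2 ^ 3) ≤ Real.log (y ^ 2) := Real.log_le_log (by norm_num) hy2
    simp only [Real.log_pow, Nat.cast_ofNat] at hlogy
    linarith [Real.log_two_gt_d9]
  have hyq : y ^ 2 - 1 ≤ q := by
    have := pow_le_pow_right₀ hy.le hm
    linarith
  have hhalf : 1.66 * (q : ℝ) / (q : ℝ) ^ 2 ≤ 1 / 2 * (Real.log q / (y ^ 2 - 1)) :=
    calc 1.66 * (q : ℝ) / (q : ℝ) ^ 2 ≤ 1 / 2 * (Real.log q / q) := by
          rw [sq, mul_div_mul_right _ _ (by linarith), ← mul_div_assoc]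
          gcongr
          linarith
      _ ≤ _ := by gcongr
  refine (tailBase_add_tailFour_le (by omega)).trans (le_trans ?_ (add_le_add hhalf
    (mul_div_sq_le_div_sub (by norm_num) (by linarith) (by norm_num))))
  rw [← add_div]
  refine div_le_div_of_nonneg_right ?_ (by positivity)
  nlinarith [mul_le_mul_of_nonneg_right hm' (show 0 ≤ 5 / 3 * Real.log q + 1.13 by linarith)]

lemma two_rpow_le_two_pow {k : ℕ} (hβ : β ≤ k) : (2 : ℝ) ^ β ≤ 2 ^ k := by
  rw [← Real.rpow_natCast]
  exact Real.rpow_le_rpow_of_exponent_le one_le_two hβ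

lemma le_three_of_log_div_le (hq17 : 17 ≤ q) (hq23 : q ≤ 23) (hy : 1 < y)
    (hym : y ^ m = (q : ℝ) - 1) (hlog : m ≠ 1 → Real.log q / (y ^ 2 - 1) ≤ 0.76) : m ≤ 3 := by
  have hq17' : (17 : ℝ) ≤ q := by exact_mod_cast hq17
  have hq23' : (q : ℝ) ≤ 23 := by exact_mod_cast hq23
  by_contra! hm
  have hlogq := (div_le_iff₀ (by nlinarith)).1 (hlog (by omega))
  have hlog17 : Real.log (2 ^ 49) ≤ Real.log (17 ^ 12) :=
    Real.log_le_log (by norm_num) (by norm_num)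
  simp only [Real.log_pow, Nat.cast_ofNat] at hlog17
  have hmono : Real.log 17 ≤ Real.log q := Real.log_le_log (by norm_num) hq17'
  have hy2 : 4.72 ≤ y ^ 2 := by linarith [Real.log_two_gt_d9]
  have hy4 : y ^ 4 ≤ y ^ m := pow_le_pow_right₀ hy.le hm
  nlinarith

lemma div_sq_le_of_prime (hq : q.Prime) (hq17 : 17 ≤ q) (hq29 : q < 29) (hβ : 0 < β)
    (hβq : 2 * β ≤ (q : ℝ) - 1) :
    46.5 / (q : ℝ) ^ 2 ≤ ((q : ℝ) ^ 2 * Real.log 2 / 2 - 3.04) / ((2 : ℝ) ^ β - 1) := by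
  have hpow : (1 : ℝ) < (2 : ℝ) ^ β := Real.one_lt_rpow one_lt_two hβ
  have hlog2 := Real.log_two_gt_d9
  have hcases : q = 17 ∨ q = 19 ∨ q = 23 := by
    interval_cases q <;> first | omega | exact absurd hq (by norm_num)
  rw [div_le_div_iff₀ (by positivity) (by linarith)]
  rcases hcases with rfl | rfl | rfl
  · have := two_rpow_le_two_pow (β := β) (k := 8) (by norm_num at hβq ⊢; linarith)
    norm_num at this ⊢
    linarith
  · have := two_rpow_le_two_pow (β := β) (k := 9) (by norm_num at hβq ⊢; linarith)
    norm_num at this ⊢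
    linarith
  · have := two_rpow_le_two_pow (β := β) (k := 11) (by norm_num at hβq ⊢; linarith)
    norm_num at this ⊢
    linarith

lemma div_sub_div_two_rpow_sub_one (hβ : 0 < β) (a b : ℝ) :
    a / (2 * ((2 : ℝ) ^ β - 1)) - b / ((2 : ℝ) ^ β - 1) = (a / 2 - b) / ((2 : ℝ) ^ β - 1) := by
  have hpow : (1 : ℝ) < (2 : ℝ) ^ β := Real.one_lt_rpow one_lt_two hβ
  have : (2 : ℝ) ^ β - 1 ≠ 0 := by linarith
  field_simp

lemma tailBase_add_tailFour_lt_of_lt (hq : q.Prime) (hq17 : 17 ≤ q) (hq29 : q < 29) (hm : m ≤ 3)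
    (hβ : 0 < β) (hβq : 2 * β ≤ (q : ℝ) - 1) :
    tailBase q m + tailFour q m + 3.04 / ((2 : ℝ) ^ β - 1)
      < 1.053 / ((q : ℝ) - 2.1) + (q : ℝ) ^ 2 * Real.log 2 / (2 * ((2 : ℝ) ^ β - 1)) := by
  have hq17' : (17 : ℝ) ≤ q := by exact_mod_cast hq17
  have hq23 : q ≤ 23 := by
    by_contra!
    interval_cases q <;> exact absurd hq (by norm_num)
  have hlog23 : Real.log (23 ^ 11) ≤ Real.log (2 ^ 50) :=
    Real.log_le_log (by norm_num) (by norm_num)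
  simp only [Real.log_pow, Nat.cast_ofNat] at hlog23
  have hlogq : Real.log q ≤ Real.log 23 :=
    Real.log_le_log (by linarith) (by exact_mod_cast hq23)
  have hlog2 := Real.log_two_lt_d9
  have hm' : m * (5 / 3 * Real.log q + 1.13) ≤ 3 * (5 / 3 * Real.log q + 1.13) := by
    gcongr
    exact_mod_cast hm
  have hnum : (3 * (m * (5 / 3 * Real.log q + 1.13)) + 1.8223 * Real.log q + 0.532) / (q : ℝ) ^ 2
      < 1.053 * q / (q : ℝ) ^ 2 + 46.5 / (q : ℝ) ^ 2 := by
    rw [← add_div]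
    refine div_lt_div_of_pos_right ?_ (by positivity)
    linarith
  have hsub := mul_div_sq_le_div_sub (x := q) (a := 2.1) (c := 1.053) (by norm_num)
    (by linarith) (by norm_num)
  have hslack := div_sq_le_of_prime hq hq17 hq29 hβ hβq
  rw [← div_sub_div_two_rpow_sub_one hβ] at hslack
  linarith [tailBase_add_tailFour_le (m := m) hq17]

/-- Since `α₁ ≥ 1 / 2` when `4 ∣ h`, the terms of `tailFour` are, for `m ≠ 1`, absorbed by
`α₁ * log q / (y ^ 2 - 1)`, and `3.04 / (2 ^ β - 1)` is much smaller than the term with `q ^ 2`. -/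
lemma tail_lt {h : ℕ} {c : ℝ} (hq : q.Prime) (hq17 : 17 ≤ q) (hm : 0 < m) (hy : 1 < y)
    (hym : y ^ m = (q : ℝ) - 1) (hβ : 0 < β) (hβq : 2 * β ≤ (q : ℝ) - 1)
    (hc : 0 ≤ c) (hc4 : 4 ∣ h → 1 / 2 ≤ c) (hlog : m ≠ 1 → Real.log q / (y ^ 2 - 1) ≤ 0.76)
    (hlog4 : m ≠ 1 → 4 ∣ h → 2 * (Real.log q / (y ^ 2 - 1)) ≤ 0.76) :
    tailBase q m + (if 4 ∣ h then tailFour q m else 0) + 3.04 / ((2 : ℝ) ^ β - 1)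
      < c * (Real.log q / (y ^ 2 - 1)) + 1.053 / ((q : ℝ) - 2.1)
        + (q : ℝ) ^ 2 * Real.log 2 / (2 * ((2 : ℝ) ^ β - 1)) := by
  have hL : 0 ≤ Real.log q / (y ^ 2 - 1) :=
    div_nonneg (Real.log_natCast_nonneg q) (by nlinarith)
  have hcL := mul_nonneg hc hL
  rcases lt_or_ge q 29 with hq29 | hq29
  · have hq23 : q ≤ 23 := by
      by_contra!
      interval_cases q <;> exact absurd hq (by norm_num)
    have hlt := tailBase_add_tailFour_lt_of_lt hq hq17 hq29
      (le_three_of_log_div_le hq17 hq23 hy hym hlog) hβ hβq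
    have hfour := tailFour_nonneg (m := m) hq17
    split_ifs <;> linarith
  · have hslack : 0 < ((q : ℝ) ^ 2 * Real.log 2 / 2 - 3.04) / ((2 : ℝ) ^ β - 1) := by
      have hq' : (29 : ℝ) ≤ q := by exact_mod_cast hq29
      refine div_pos ?_ (sub_pos.2 (Real.one_lt_rpow one_lt_two hβ))
      nlinarith [Real.log_two_gt_d9]
    rw [← div_sub_div_two_rpow_sub_one hβ] at hslack
    suffices tailBase q m + (if 4 ∣ h then tailFour q m else 0)
        ≤ c * (Real.log q / (y ^ 2 - 1)) + 1.053 / ((q : ℝ) - 2.1) by linarith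
    split_ifs with h4
    · rcases eq_or_ne m 1 with rfl | hm1
      · linarith [tailBase_one_add_tailFour_one_le hq29]
      · refine (tailBase_add_tailFour_le_of_le hq29 (by omega) hy hym (hlog4 hm1 h4)).trans ?_
        gcongr
        exact hc4 h4
    · linarith [tailBase_le_of_le hq29 hy hym hlog]

end Tail

section Assembly

open scoped Classical in
/-- Bound for the contribution to `S(m,q)` of the primes `p < q` whose order `gp q m p` is less than
`α` and not a power of `2`. In the first case there are none. -/
noncomputable def orderNotTwoPowBound (m h : ℕ) (α z : ℝ) : ℝ :=
  if ∀ p : ℕ, p.Prime → Odd p → p ∣ h → α ≤ 2 * p then 0 else 8 / 7 * Real.log (m * α ^ 2) / z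

/-- Bound for the contribution to `S(m,q)` of the primes `p < q` of order `2`. There are none if
`m = 1`. -/
noncomputable def orderTwoBound (q m : ℕ) (y : ℝ) : ℝ :=
  if m = 1 then 0 else Real.log q / (y ^ 2 - 1)

lemma div_log_mul_sq_nonneg {m : ℕ} {α z : ℝ} (hm : 0 < m) (hα : 1 ≤ α) (hz : 0 ≤ z) :
    0 ≤ 8 / 7 * Real.log (m * α ^ 2) / z := by
  have hm' : (1 : ℝ) ≤ m := by exact_mod_cast hm
  have := Real.log_nonneg (one_le_mul_of_one_le_of_one_le hm' (one_le_pow₀ hα (n := 2)))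
  positivity

lemma orderNotTwoPowBound_nonneg {m : ℕ} {α z : ℝ} (hm : 0 < m) (h : ℕ) (hα : 1 ≤ α)
    (hz : 0 ≤ z) : 0 ≤ orderNotTwoPowBound m h α z := by
  unfold orderNotTwoPowBound
  split_ifs
  · exact le_rfl
  · exact div_log_mul_sq_nonneg hm hα hz

lemma orderNotTwoPowBound_le {m : ℕ} {α z : ℝ} (hm : 0 < m) (h : ℕ) (hα : 1 ≤ α) (hz : 0 ≤ z) :
    orderNotTwoPowBound m h α z ≤ 8 / 7 * Real.log (m * α ^ 2) / z := by
  unfold orderNotTwoPowBound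
  split_ifs
  · exact div_log_mul_sq_nonneg hm hα hz
  · exact le_rfl

lemma log_div_sq_sub_one_nonneg_of_one_lt {y : ℝ} (q : ℕ) (hy : 1 < y) :
    0 ≤ Real.log q / (y ^ 2 - 1) :=
  div_nonneg (Real.log_natCast_nonneg q) (by nlinarith)

lemma orderTwoBound_nonneg {y : ℝ} (q m : ℕ) (hy : 1 < y) : 0 ≤ orderTwoBound q m y := by
  unfold orderTwoBound
  split_ifs
  · exact le_rfl
  · exact log_div_sq_sub_one_nonneg_of_one_lt q hy

lemma orderTwoBound_le {y : ℝ} (q m : ℕ) (hy : 1 < y) :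
    orderTwoBound q m y ≤ Real.log q / (y ^ 2 - 1) := by
  unfold orderTwoBound
  split_ifs
  · exact log_div_sq_sub_one_nonneg_of_one_lt q hy
  · exact le_rfl

lemma exists_eq_two_pow_of_le_two_mul {g h : ℕ} {α : ℝ} (hgh : g ∣ h) (hg0 : g ≠ 0)
    (hg : Even g) (hgα : (g : ℝ) < α)
    (hodd : ∀ p : ℕ, p.Prime → Odd p → p ∣ h → α ≤ 2 * p) : ∃ j, g = 2 ^ j := by
  refine ⟨_, Nat.eq_prime_pow_of_unique_prime_dvd hg0 fun {d} hd hdg => ?_⟩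
  refine hd.eq_two_or_odd'.resolve_right fun hd_odd => ?_
  have hdvd : 2 * d ∣ g :=
    (Nat.coprime_two_left.2 hd_odd).mul_dvd_of_dvd_of_dvd hg.two_dvd hdg
  have hle : 2 * (d : ℝ) ≤ g := by exact_mod_cast Nat.le_of_dvd (Nat.pos_of_ne_zero hg0) hdvd
  linarith [hodd d hd hd_odd (hdg.trans hgh)]

lemma evenTerm_self {q m : ℕ} [Fact q.Prime] (hm : m ≠ 0) : evenTerm q m q = 0 := by
  have hg : gp q m q = 0 := by rw [gp, ZMod.natCast_self, zero_pow hm, orderOf_zero]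
  simp [evenTerm, hg]

lemma sum_evenTerm_le_of_eq_sub_two {q m h : ℕ} {s : Finset ℕ} (hq : 5 ≤ q)
    (hs : ∀ p ∈ s, p = q - 2 ∧ 4 ∣ h) :
    ∑ p ∈ s, evenTerm q m p ≤ if 4 ∣ h then Real.log q / (((q : ℝ) - 2) ^ 2 - 1) else 0 := by
  split_ifs with h4
  · have hsub : s ⊆ {q - 2} := fun p hp => Finset.mem_singleton.2 (hs p hp).1
    calc ∑ p ∈ s, evenTerm q m p ≤ ∑ p ∈ {q - 2}, evenTerm q m p :=
          Finset.sum_le_sum_of_subset_of_nonneg hsub fun p _ _ => evenTerm_nonneg q m p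
      _ = evenTerm q m (q - 2) := Finset.sum_singleton _ _
      _ ≤ _ := evenTerm_sub_two_le hq
  · exact (Finset.sum_eq_zero fun p hp => absurd (hs p hp).2 h4).le

variable {q m h : ℕ} [Fact q.Prime] {y z α : ℝ} {s : Finset ℕ}

lemma sum_evenTerm_le_orderTwoBound (hq : 5 ≤ q) (hm : 0 < m) (hy : 1 < y)
    (hym : y ^ m = (q : ℝ) - 1) (hs : ∀ p ∈ s, p.Prime ∧ p < q ∧ gp q m p = 2) :
    ∑ p ∈ s, evenTerm q m p ≤ orderTwoBound q m y := by
  unfold orderTwoBound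
  split_ifs with hm1
  · subst hm1
    refine (Finset.sum_eq_zero fun p hp => ?_).le
    obtain ⟨hprime, hpq, hg⟩ := hs p hp
    exact absurd hg (gp_one_ne_two (by omega) (by omega) hprime hpq)
  · exact sum_evenTerm_le_of_gp_eq_two hm hy hym hs

lemma sum_evenTerm_le_orderNotTwoPowBound (hm : 0 < m) (hh : h ≠ 0) (hz : 1 < z)
    (hzm : z ^ m = q) (hα : 14 ≤ α) (hs : ∀ p ∈ s, p.Prime ∧ p < q ∧ Even (gp q m p) ∧
      gp q m p ∣ h ∧ (gp q m p : ℝ) < α ∧ ¬∃ j, gp q m p = 2 ^ j) :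
    ∑ p ∈ s, evenTerm q m p ≤ orderNotTwoPowBound m h α z := by
  unfold orderNotTwoPowBound
  split_ifs with hodd
  · refine (Finset.sum_eq_zero fun p hp => ?_).le
    obtain ⟨-, -, heven, hgh, hgα, hpow⟩ := hs p hp
    exact absurd
      (exists_eq_two_pow_of_le_two_mul hgh (ne_zero_of_dvd_ne_zero hh hgh) heven hgα hodd) hpow
  · refine sum_evenTerm_le_of_gp_ne_two_pow hm hz hzm hα fun p hp => ?_
    obtain ⟨hprime, hpq, -, -, hgα, hpow⟩ := hs p hp
    exact ⟨hprime, hpq, not_exists.1 hpow, hgα⟩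

lemma sum_evenTerm_le_of_exists_gp_eq_two_pow (hq : 5 ≤ q) (hm : 0 < m) (hy : 1 < y)
    (hym : y ^ m = (q : ℝ) - 1) (hh : h ≠ 0) (hν : 1 ≤ padicValNat 2 h) (hα : 1 ≤ α)
    (hs : ∀ p ∈ s, p.Prime ∧ p < q ∧ Even (gp q m p) ∧ gp q m p ∣ h ∧ (gp q m p : ℝ) < α ∧
      ∃ j, gp q m p = 2 ^ j) :
    ∑ p ∈ s, evenTerm q m p ≤ alphaOne h α * (Real.log q * (y / (y ^ 2 - 1)))
      + orderTwoBound q m y + if 4 ∣ h then Real.log q / (((q : ℝ) - 2) ^ 2 - 1) else 0 := by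
  have hexp : ∀ {p}, p ∈ s → gp q m p ≠ 2 → ∃ j, 2 ≤ j ∧ gp q m p = 2 ^ j := by
    intro p hp hg
    obtain ⟨-, -, heven, -, -, j, hj⟩ := hs p hp
    refine ⟨j, ?_, hj⟩
    by_contra! hj2
    interval_cases j
    · simp [hj] at heven
    · exact hg hj
  have hq_odd : Odd q := (Fact.out : q.Prime).odd_of_ne_two (by omega)
  rw [← Finset.sum_filter_add_sum_filter_not s (fun p => gp q m p = 2),
    ← Finset.sum_filter_add_sum_filter_not (s.filter fun p => ¬gp q m p = 2) (fun p => p = q - 2)]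
  have htwo := sum_evenTerm_le_orderTwoBound (s := s.filter fun p => gp q m p = 2) hq hm hy hym
    fun p hp => by
      obtain ⟨hp, hg⟩ := Finset.mem_filter.1 hp
      exact ⟨(hs p hp).1, (hs p hp).2.1, hg⟩
  have hsub_two := sum_evenTerm_le_of_eq_sub_two (m := m) (h := h)
    (s := (s.filter fun p => ¬gp q m p = 2).filter fun p => p = q - 2) hq fun p hp => by
      obtain ⟨⟨hp, hg⟩, hpq⟩ := by simpa only [Finset.mem_filter] using hp
      obtain ⟨j, hj, hgj⟩ := hexp hp hg
      exact ⟨hpq, ((pow_dvd_pow 2 hj).trans hgj.symm.dvd).trans (hs p hp).2.2.2.1⟩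
  have hrest := sum_evenTerm_le_of_gp_two_pow_lt
    (s := (s.filter fun p => ¬gp q m p = 2).filter fun p => ¬p = q - 2)
    hq_odd hm hy hym hh hν hα fun p hp => by
      obtain ⟨⟨hp, hg⟩, hpq⟩ := by simpa only [Finset.mem_filter] using hp
      obtain ⟨hprime, hlt, -, hgh, hgα, -⟩ := hs p hp
      obtain ⟨j, hj, hgj⟩ := hexp hp hg
      exact ⟨hprime, hlt, hpq, j, hj, hgj, hgj ▸ hgh, by exact_mod_cast hgj ▸ hgα⟩
  linarith

lemma sum_evenTerm_le_of_lt_left (hq : 5 ≤ q) (hm : 0 < m) (hh : h ≠ 0)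
    (hν : 1 ≤ padicValNat 2 h) (hy : 1 < y) (hym : y ^ m = (q : ℝ) - 1) (hz : 1 < z)
    (hzm : z ^ m = q) (hα : 14 ≤ α)
    (hs : ∀ p ∈ s, p.Prime ∧ p < q ∧ Even (gp q m p) ∧ gp q m p ∣ h) :
    ∑ p ∈ s, evenTerm q m p ≤ alphaOne h α * (Real.log q * (y / (y ^ 2 - 1)))
      + orderTwoBound q m y + (if 4 ∣ h then Real.log q / (((q : ℝ) - 2) ^ 2 - 1) else 0)
      + orderNotTwoPowBound m h α z + 3.04 / ((2 : ℝ) ^ (α / 2) - 1) := by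
  classical
  rw [← Finset.sum_filter_add_sum_filter_not s (fun p => (gp q m p : ℝ) < α),
    ← Finset.sum_filter_add_sum_filter_not (s.filter fun p => (gp q m p : ℝ) < α)
      (fun p => ∃ j, gp q m p = 2 ^ j)]
  have hpow := sum_evenTerm_le_of_exists_gp_eq_two_pow
    (s := (s.filter fun p => (gp q m p : ℝ) < α).filter fun p => ∃ j, gp q m p = 2 ^ j)
    hq hm hy hym hh hν (by linarith) fun p hp => by
      obtain ⟨⟨hp, hgα⟩, hj⟩ := by simpa only [Finset.mem_filter] using hp
      obtain ⟨hprime, hlt, heven, hgh⟩ := hs p hp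
      exact ⟨hprime, hlt, heven, hgh, hgα, hj⟩
  have hnot_pow := sum_evenTerm_le_orderNotTwoPowBound
    (s := (s.filter fun p => (gp q m p : ℝ) < α).filter fun p => ¬∃ j, gp q m p = 2 ^ j)
    hm hh hz hzm hα fun p hp => by
      obtain ⟨⟨hp, hgα⟩, hj⟩ := by simpa only [Finset.mem_filter] using hp
      obtain ⟨hprime, hlt, heven, hgh⟩ := hs p hp
      exact ⟨hprime, hlt, heven, hgh, hgα, hj⟩
  have hlarge := sum_evenTerm_le_of_two_mul_le_gp (q := q) (m := m) (β := α / 2)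
    (s := s.filter fun p => ¬(gp q m p : ℝ) < α) (by linarith) fun p hp => by
      obtain ⟨hp, hgα⟩ := Finset.mem_filter.1 hp
      exact ⟨(hs p hp).1, by linarith⟩
  linarith

lemma sum_evenTerm_le_of_lt_right (hq : q ≠ 2) (hm : 0 < m) (hh : h ≠ 0)
    (hs : ∀ p ∈ s, p.Prime ∧ q < p ∧ Even (gp q m p) ∧ gp q m p ∣ h) :
    ∑ p ∈ s, evenTerm q m p ≤ tailBase q m
      + if 4 ∣ h then m * 2 * ((5 / 3 * Real.log q + 1.13) / (q : ℝ) ^ 2) else 0 := by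
  have hq_odd : Odd q := (Fact.out : q.Prime).odd_of_ne_two hq
  rw [← Finset.sum_filter_add_sum_filter_not s (fun p => gp q m p = 2),
    ← Finset.sum_filter_add_sum_filter_not (s.filter fun p => ¬gp q m p = 2)
      (fun p => gp q m p = 4)]
  have htwo := sum_evenTerm_le_of_lt_of_gp_eq (s := s.filter fun p => gp q m p = 2) hm two_pos
    fun p hp => by
      obtain ⟨hp, hg⟩ := Finset.mem_filter.1 hp
      exact ⟨(hs p hp).1, (hs p hp).2.1, hg⟩
  have hfour : ∑ p ∈ (s.filter fun p => ¬gp q m p = 2) with gp q m p = 4, evenTerm q m p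
      ≤ if 4 ∣ h then m * 2 * ((5 / 3 * Real.log q + 1.13) / (q : ℝ) ^ 2) else 0 := by
    split_ifs with h4
    · have htot : (Nat.totient 4 : ℝ) = 2 := by exact_mod_cast (by decide : Nat.totient 4 = 2)
      rw [← htot]
      refine sum_evenTerm_le_of_lt_of_gp_eq hm four_pos fun p hp => ?_
      obtain ⟨⟨hp, -⟩, hg⟩ := by simpa only [Finset.mem_filter] using hp
      exact ⟨(hs p hp).1, (hs p hp).2.1, hg⟩
    · refine (Finset.sum_eq_zero fun p hp => ?_).le
      obtain ⟨⟨hp, -⟩, hg⟩ := by simpa only [Finset.mem_filter] using hp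
      exact absurd (hg ▸ (hs p hp).2.2.2) h4
  have hsix := sum_evenTerm_le_of_lt_of_six_le_gp (m := m)
    (s := (s.filter fun p => ¬gp q m p = 2).filter fun p => ¬gp q m p = 4) hq_odd fun p hp => by
      obtain ⟨⟨hp, hg2⟩, hg4⟩ := by simpa only [Finset.mem_filter] using hp
      obtain ⟨hprime, hlt, ⟨k, hk⟩, hgh⟩ := hs p hp
      have := ne_zero_of_dvd_ne_zero hh hgh
      exact ⟨hprime, hlt, by omega⟩
  rw [Nat.totient_two, Nat.cast_one, mul_one] at htwo
  rw [tailBase]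
  linarith

lemma sum_evenTerm_le (hq : 5 ≤ q) (hmh : m * h = q - 1) (hν : 1 ≤ padicValNat 2 h) (hy : 1 < y)
    (hym : y ^ m = (q : ℝ) - 1) (hz : 1 < z) (hzm : z ^ m = q) (hα : 14 ≤ α)
    (hs : ∀ p ∈ s, p.Prime) :
    ∑ p ∈ s, evenTerm q m p ≤ alphaOne h α * (Real.log q * (y / (y ^ 2 - 1)))
      + orderNotTwoPowBound m h α z + orderTwoBound q m y + 3.04 / ((2 : ℝ) ^ (α / 2) - 1)
      + (tailBase q m + if 4 ∣ h then tailFour q m else 0) := by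
  have hq' : q.Prime := Fact.out
  have hm : 0 < m := by
    by_contra! hm
    simp only [Nat.le_zero.1 hm, zero_mul] at hmh
    omega
  have hh : h ≠ 0 := by
    rintro rfl
    omega
  rw [← Finset.sum_filter_ne_zero]
  set t := s.filter fun p => evenTerm q m p ≠ 0
  have ht : ∀ p ∈ t, p.Prime ∧ p ≠ q ∧ Even (gp q m p) ∧ gp q m p ∣ h := by
    intro p hp
    obtain ⟨hp, hne⟩ := Finset.mem_filter.1 hp
    have hpq : p ≠ q := by
      rintro rfl
      exact hne (evenTerm_self hm.ne')
    refine ⟨hs p hp, hpq, ?_, gp_dvd hmh fun hdvd => ?_⟩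
    · by_contra hodd
      exact hne (evenTerm_of_odd_gp (Nat.not_even_iff_odd.1 hodd))
    · exact hpq ((Nat.prime_dvd_prime_iff_eq hq' (hs p hp)).1 hdvd).symm
  have hleft := sum_evenTerm_le_of_lt_left (s := t.filter (· < q)) hq hm hh hν hy hym hz hzm hα
    fun p hp => by
      obtain ⟨hp, hlt⟩ := Finset.mem_filter.1 hp
      exact ⟨(ht p hp).1, hlt, (ht p hp).2.2⟩
  have hright := sum_evenTerm_le_of_lt_right (q := q) (s := t.filter (¬· < q)) (by omega) hm hh
    fun p hp => by
      obtain ⟨hp, hlt⟩ := Finset.mem_filter.1 hp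
      exact ⟨(ht p hp).1, by have := (ht p hp).2.1; omega, (ht p hp).2.2⟩
  rw [← Finset.sum_filter_add_sum_filter_not t (· < q)]
  refine (add_le_add hleft hright).trans_eq ?_
  unfold tailFour
  split_ifs <;> ring

end Assembly

section Main

variable {q m h : ℕ} {y z α : ℝ}

lemma mul_div_sub_one_eq (hy : 1 < y) (c L : ℝ) :
    c * L / (y - 1) = c * (L * (y / (y ^ 2 - 1))) + c * (L / (y ^ 2 - 1)) := by
  have hfactor : y ^ 2 - 1 = (y + 1) * (y - 1) := by ring
  have : y + 1 ≠ 0 := by linarith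
  have : y - 1 ≠ 0 := by linarith
  rw [hfactor]
  field_simp

lemma div_sq_sub_one_le_mul_div_sub_one {c L : ℝ} (hy : 1 < y) (hc : 1 / 2 ≤ c) (hL : 0 ≤ L) :
    L / (y ^ 2 - 1) ≤ c * L / (y - 1) := by
  have hsq : y ^ 2 - 1 = (y - 1) * (y + 1) := by ring
  rw [hsq, ← div_div, mul_div_assoc, div_le_iff₀ (by linarith)]
  have hfactor : 1 ≤ c * (y + 1) := by nlinarith
  linarith [mul_le_mul_of_nonneg_left hfactor (div_nonneg hL (by linarith : 0 ≤ y - 1))]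

lemma seventeen_le_and_fourteen_le (hq : q.Prime) (hα : 3 ≤ α) (hαq : α ≤ (q : ℝ) - 1)
    (hsmall : (q : ℝ) ^ 2 * Real.log 2 / (2 * ((2 : ℝ) ^ (α / 2) - 1)) ≤ 0.76) :
    17 ≤ q ∧ 14 ≤ α := by
  have hpow : 1 < (2 : ℝ) ^ (α / 2) := Real.one_lt_rpow one_lt_two (by linarith)
  have hq0 : (0 : ℝ) < (q : ℝ) ^ 2 := by
    have := hq.pos
    positivity
  have hbig : 1 + 0.45 * (q : ℝ) ^ 2 < (2 : ℝ) ^ (α / 2) := by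
    rw [div_le_iff₀ (by linarith)] at hsmall
    nlinarith [Real.log_two_gt_d9]
  have hq4 : 4 ≤ q := by
    have : (4 : ℝ) ≤ q := by linarith
    exact_mod_cast this
  have hq17 : 17 ≤ q := by
    by_contra! hlt
    have hcases : q = 5 ∨ q = 7 ∨ q = 11 ∨ q = 13 := by
      interval_cases q <;> first | omega | exact absurd hq (by norm_num)
    have hle (k : ℕ) (hk : q = 2 * k + 1) : 1 + 0.45 * ((2 * k + 1 : ℕ) : ℝ) ^ 2 < 2 ^ k := by
      rw [← hk]
      refine hbig.trans_le (two_rpow_le_two_pow ?_)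
      rw [hk] at hαq
      push_cast at hαq
      linarith
    rcases hcases with hq' | hq' | hq' | hq'
    · have := hle 2 hq'
      norm_num at this
    · have := hle 3 hq'
      norm_num at this
    · have := hle 5 hq'
      norm_num at this
    · have := hle 6 hq'
      norm_num at this
  refine ⟨hq17, ?_⟩
  by_contra! hlt
  have hle : (2 : ℝ) ^ (α / 2) ≤ 2 ^ 7 := two_rpow_le_two_pow (by norm_num; linarith)
  have hq17' : (17 : ℝ) ≤ q := by exact_mod_cast hq17
  nlinarith

/-- If the right-hand side exceeds the absolute bound `0.76` there is nothing to show; otherwise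
`q`, `α` and `y` are large enough for the estimate of the even terms. -/
lemma Smq_lt [Fact q.Prime] (hmh : m * h = q - 1) (h2 : 2 ∣ h) (hy : 1 < y)
    (hym : y ^ m = (q : ℝ) - 1) (hz : 1 < z) (hzm : z ^ m = q) (hα : 3 ≤ α)
    (hαq : α ≤ (q : ℝ) - 1) :
    Smq q m < alphaOne h α * Real.log q / (y - 1) + orderNotTwoPowBound m h α z
      + 1.053 / ((q : ℝ) - 2.1) + (q : ℝ) ^ 2 * Real.log 2 / (2 * ((2 : ℝ) ^ (α / 2) - 1))
      + orderTwoBound q m y := by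
  have hq : q.Prime := Fact.out
  have hq4 : 4 ≤ q := by
    have : (4 : ℝ) ≤ q := by linarith
    exact_mod_cast this
  have hmh0 : m * h ≠ 0 := by omega
  have hm : 0 < m := Nat.pos_of_ne_zero (left_ne_zero_of_mul hmh0)
  have hh : h ≠ 0 := right_ne_zero_of_mul hmh0
  have hν : 1 ≤ padicValNat 2 h := one_le_padicValNat_of_dvd hh h2
  have hpow : 1 < (2 : ℝ) ^ (α / 2) := Real.one_lt_rpow one_lt_two (by linarith)
  have hL := Real.log_natCast_nonneg q
  have hα₁ : 0 ≤ alphaOne h α := alphaOne_nonneg hν (by linarith)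
  have hα₁_term : 0 ≤ alphaOne h α * Real.log q / (y - 1) :=
    div_nonneg (by positivity) (by linarith)
  have hnot_pow : 0 ≤ orderNotTwoPowBound m h α z :=
    orderNotTwoPowBound_nonneg hm h (by linarith) (by linarith)
  have hq_term : 0 < 1.053 / ((q : ℝ) - 2.1) := div_pos (by norm_num) (by linarith)
  have hα_term : 0 ≤ (q : ℝ) ^ 2 * Real.log 2 / (2 * ((2 : ℝ) ^ (α / 2) - 1)) :=
    div_nonneg (by positivity) (by linarith)
  have htwo := orderTwoBound_nonneg q m hy
  by_contra! hge
  have hS := Smq_le (q := q) (m := m) (by omega)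
  obtain ⟨hq17, hα14⟩ := seventeen_le_and_fourteen_le hq hα hαq (by linarith)
  have htwo_eq (hm1 : m ≠ 1) : orderTwoBound q m y = Real.log q / (y ^ 2 - 1) := if_neg hm1
  have htail := tail_lt (h := h) (β := α / 2) hq hq17 hm hy hym (by linarith) (by linarith) hα₁
    (alphaOne_ge_half hh · hα) (fun hm1 => by linarith [htwo_eq hm1]) fun hm1 h4 => by
      linarith [htwo_eq hm1, div_sq_sub_one_le_mul_div_sub_one hy (alphaOne_ge_half hh h4 hα) hL]
  have heven := Smq_le_of_forall_sum_evenTerm_le (by omega) fun s hs =>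
    sum_evenTerm_le (by omega) hmh hν hy hym hz hzm hα14 hs
  rw [mul_div_sub_one_eq hy] at hge
  linarith

lemma mul_div_eq_sub_one (hq : q.Prime) (hq2 : q ≠ 2) (hm : m ∣ (q - 1) / 2) :
    0 < m ∧ m * ((q - 1) / m) = q - 1 ∧ 2 ∣ (q - 1) / m := by
  obtain ⟨a, ha⟩ := hq.odd_of_ne_two hq2
  have hq1 := hq.one_lt
  obtain ⟨k, hk⟩ := hm
  have hm0 : 0 < m := by
    by_contra! hm0
    simp only [Nat.le_zero.1 hm0, zero_mul] at hk
    omega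
  have hmk : m * (2 * k) = q - 1 := by
    rw [Nat.mul_left_comm, ← hk]
    omega
  rw [← hmk, Nat.mul_div_cancel_left _ hm0]
  exact ⟨hm0, rfl, k, rfl⟩

lemma rpow_two_div_eq_sq {x : ℝ} (hx : 0 ≤ x) (m : ℕ) :
    x ^ ((2 : ℝ) / m) = (x ^ ((1 : ℝ) / m)) ^ 2 := by
  rw [← Real.rpow_mul_natCast hx]
  congr 1
  push_cast
  ring

lemma rpow_one_div_pow {x : ℝ} (hx : 0 ≤ x) (hm : m ≠ 0) : (x ^ ((1 : ℝ) / m)) ^ m = x := by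
  rw [one_div, Real.rpow_inv_natCast_pow hx hm]

end Main

/-- Upper bound for `S(m,q)` (Lemma 20 of the paper): for `q` an odd prime,
`m ∣ (q−1)/2`, `h = (q−1)/m`, and `3 ≤ α ≤ q−1`,
`S(m,q) < α₁·log q/((q−1)^{1/m}−1) + (8/7)·log(m·α²)/q^{1/m} + 1.053/(q−2.1)
  + q²·log 2/(2(2^{α/2}−1)) + log q/((q−1)^{2/m}−1)`,
with `α₁ = min{(ν₂(h)−1)/2, log α/log 4}`; the second term can be dropped if `α` is at most
twice the smallest odd prime factor of `h`, and the last term can be dropped if `m = 1`. -/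
theorem statement18 (q m h : ℕ) (hq : q.Prime) (hq_odd : q ≠ 2) (hm : m ∣ (q - 1) / 2)
    (hh : h = (q - 1) / m) (α : ℝ) (hα : 3 ≤ α) (hα' : α ≤ (q : ℝ) - 1) :
    Smq q m <
      min (((padicValNat 2 h : ℝ) - 1) / 2) (Real.log α / Real.log 4) * Real.log q /
          (((q : ℝ) - 1) ^ ((1 : ℝ) / m) - 1)
        + (8 / 7) * Real.log (m * α ^ 2) / (q : ℝ) ^ ((1 : ℝ) / m)
        + 1.053 / ((q : ℝ) - 2.1)
        + (q : ℝ) ^ 2 * Real.log 2 / (2 * ((2 : ℝ) ^ (α / 2) - 1))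
        + Real.log q / (((q : ℝ) - 1) ^ ((2 : ℝ) / m) - 1) ∧
    ((∀ p : ℕ, p.Prime → Odd p → p ∣ h → α ≤ 2 * p) →
      Smq q m <
        min (((padicValNat 2 h : ℝ) - 1) / 2) (Real.log α / Real.log 4) * Real.log q /
            (((q : ℝ) - 1) ^ ((1 : ℝ) / m) - 1)
          + 1.053 / ((q : ℝ) - 2.1)
          + (q : ℝ) ^ 2 * Real.log 2 / (2 * ((2 : ℝ) ^ (α / 2) - 1))
          + Real.log q / (((q : ℝ) - 1) ^ ((2 : ℝ) / m) - 1)) ∧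
    (m = 1 →
      Smq q m <
        min (((padicValNat 2 h : ℝ) - 1) / 2) (Real.log α / Real.log 4) * Real.log q /
            (((q : ℝ) - 1) ^ ((1 : ℝ) / m) - 1)
          + (8 / 7) * Real.log (m * α ^ 2) / (q : ℝ) ^ ((1 : ℝ) / m)
          + 1.053 / ((q : ℝ) - 2.1)
          + (q : ℝ) ^ 2 * Real.log 2 / (2 * ((2 : ℝ) ^ (α / 2) - 1))) := by
  have : Fact q.Prime := ⟨hq⟩
  obtain ⟨hm0, hmh, h2⟩ := mul_div_eq_sub_one hq hq_odd hm
  rw [← hh] at hmh h2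
  have hm' : (0 : ℝ) < 1 / m := by positivity
  rw [rpow_two_div_eq_sq (by linarith)]
  have hym := rpow_one_div_pow (x := (q : ℝ) - 1) (by linarith) hm0.ne'
  have hzm := rpow_one_div_pow (x := (q : ℝ)) (by linarith) hm0.ne'
  have hy : 1 < ((q : ℝ) - 1) ^ ((1 : ℝ) / m) := Real.one_lt_rpow (by linarith) hm'
  have hz : 1 < (q : ℝ) ^ ((1 : ℝ) / m) := Real.one_lt_rpow (by linarith) hm'
  have hlt := Smq_lt hmh h2 hy hym hz hzm hα hα'
  have htwo := orderTwoBound_le q m hy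
  have hnot_pow := orderNotTwoPowBound_le (α := α) hm0 h (by linarith) (by linarith only [hz])
  rw [alphaOne] at hlt
  refine ⟨by linarith, fun hodd => ?_, fun hm1 => ?_⟩
  · rw [orderNotTwoPowBound, if_pos hodd] at hlt
    linarith
  · rw [orderTwoBound, if_pos hm1] at hlt
    linarith
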